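/- (Approximate optimality of M3FC solutions.) Let 𝒳, 𝒰, 𝒳⁰, 𝒰⁰ be compact metric spaces, with p, p⁰, r Lipschitz, γ ∈ (0,1), and equi-Lipschitz policy classes Π, Π⁰. Let (π̂*, π⁰*) be optimal deterministic policies for the limiting M3FC MDP, i.e., (π̂*, π⁰*) ∈ argmax J(π̂, π⁰) where J(π̂,π⁰) = E[Σ_t γ^t r(x⁰_t, u⁰_t, μ_t)], and suppose the induced agent-level policy satisfies Φ(π̂*) ∈ Π. Then (Φ(π̂*), π⁰*) is ε-optimal in the N-agent system: J^N(Φ(π̂*), π⁰*) ≥ sup_{(π,π⁰) ∈ Π × Π⁰} J^N(π, π⁰) − ε, with ε = ε(N) → 0 as N → ∞. -/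

import Mathlib

open MeasureTheory

noncomputable instance {X : Type*} [MeasurableSpace X] : MeasurableSpace (ProbabilityMeasure X) :=
  inferInstanceAs (MeasurableSpace {μ : Measure X // IsProbabilityMeasure μ})

/-- `W₁` distance on probability measures, via Kantorovich duality. -/
noncomputable def W1 {X : Type*} [MeasurableSpace X] [PseudoMetricSpace X]
    (μ ν : ProbabilityMeasure X) : ℝ :=
  ⨆ f : {f : X → ℝ // LipschitzWith 1 f},
    |∫ x, (f : X → ℝ) x ∂(μ : Measure X) - ∫ x, (f : X → ℝ) x ∂(ν : Measure X)|

/-- Empirical measure of `N` points (an arbitrary probability measure if `N = 0`). -/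
noncomputable def emp {X : Type*} [MeasurableSpace X] [Nonempty X] (N : ℕ) (x : Fin N → X) :
    ProbabilityMeasure X := by
  classical
  exact if hN : N = 0 then ⟨Measure.dirac (Classical.arbitrary X), inferInstance⟩
  else ⟨(N : ENNReal)⁻¹ • ∑ i : Fin N, Measure.dirac (x i), by
    constructor
    simp only [Measure.smul_apply, Measure.coe_finset_sum, Finset.sum_apply,
      Measure.dirac_apply' _ MeasurableSet.univ, smul_eq_mul]
    simp only [Set.indicator_univ, Pi.one_apply, Finset.sum_const, Finset.card_univ,
      Fintype.card_fin, nsmul_eq_mul, mul_one]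
    exact ENNReal.inv_mul_cancel (by exact_mod_cast hN) (by simp)⟩

/-- Law of `(x⁰_t, u⁰_t, (x^{i,N}_t)_i)` in the `N`-agent M3FC system: minor agents start
i.i.d. `μ0`, the major agent starts at `x00`; minor actions are sampled from the shared policy
`π`, the major action from `π0`, and states transition through `p` and `p⁰`, all driven by the
empirical mean field. -/
noncomputable def m3LawN {X U X0 U0 : Type*} [MeasurableSpace X] [Nonempty X]
    [MeasurableSpace U] [MeasurableSpace X0] [MeasurableSpace U0]
    (p : X → U → X0 → U0 → ProbabilityMeasure X → ProbabilityMeasure X)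
    (p0 : X0 → U0 → ProbabilityMeasure X → ProbabilityMeasure X0)
    (π : ℕ → X → X0 → ProbabilityMeasure X → ProbabilityMeasure U)
    (π0 : ℕ → X0 → ProbabilityMeasure X → ProbabilityMeasure U0)
    (μ0 : ProbabilityMeasure X) (x00 : X0) (N : ℕ) :
    ℕ → Measure (X0 × U0 × (Fin N → X))
  | 0 => (Measure.pi fun _ : Fin N => (μ0 : Measure X)).bind fun x =>
      ((π0 0 x00 (emp N x) : Measure U0)).map fun u0 => (x00, u0, x)
  | t + 1 => (m3LawN p p0 π π0 μ0 x00 N t).bind fun s =>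
      (((p0 s.1 s.2.1 (emp N s.2.2) : Measure X0)).prod
        (Measure.pi fun i => ((π t (s.2.2 i) s.1 (emp N s.2.2) : Measure U)).bind
          fun u => (p (s.2.2 i) u s.1 s.2.1 (emp N s.2.2) : Measure X))).bind
        fun y => ((π0 (t + 1) y.1 (emp N y.2) : Measure U0)).map fun u0 => (y.1, u0, y.2)

/-- Law of `(x⁰_t, u⁰_t, μ_t)` in the limiting M3FC process, where `Tq t x⁰ u⁰ μ` is the
(closed-loop) deterministic mean field transition. -/
noncomputable def m3LimLaw {X U0 X0 : Type*} [MeasurableSpace X]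
    [MeasurableSpace X0] [MeasurableSpace U0]
    (p0 : X0 → U0 → ProbabilityMeasure X → ProbabilityMeasure X0)
    (π0 : ℕ → X0 → ProbabilityMeasure X → ProbabilityMeasure U0)
    (Tq : ℕ → X0 → U0 → ProbabilityMeasure X → ProbabilityMeasure X)
    (μ0 : ProbabilityMeasure X) (x00 : X0) :
    ℕ → Measure (X0 × U0 × ProbabilityMeasure X)
  | 0 => ((π0 0 x00 μ0 : Measure U0)).map fun u0 => (x00, u0, μ0)
  | t + 1 => (m3LimLaw p0 π0 Tq μ0 x00 t).bind fun s =>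
      ((p0 s.1 s.2.1 s.2.2 : Measure X0)).bind fun y0 =>
        ((π0 (t + 1) y0 (Tq t s.1 s.2.1 s.2.2) : Measure U0)).map
          fun u0 => (y0, u0, Tq t s.1 s.2.1 s.2.2)


/-- The action set `ℋ(μ)`: joint distributions on `𝒳 × 𝒰` with first marginal `μ`. -/
def Hset {X U : Type*} [MeasurableSpace X] [MeasurableSpace U]
    (μ : ProbabilityMeasure X) : Set (ProbabilityMeasure (X × U)) :=
  {h | (h : Measure (X × U)).map Prod.fst = (μ : Measure X)}

/-- Law of the M3FC MDP state `(x⁰_t, μ_t)` under a (time-variant, deterministic) M3FC policy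
`pol` choosing actions `(h, u⁰) ∈ ℋ(μ) × 𝒰⁰`, with mean field transition `T` and major kernel
`p⁰`, started at `s0`. -/
noncomputable def m3Law {X U X0 U0 : Type*} [MeasurableSpace X] [MeasurableSpace U]
    [MeasurableSpace X0] [MeasurableSpace U0]
    (p0 : X0 → U0 → ProbabilityMeasure X → ProbabilityMeasure X0)
    (T : X0 → U0 → ProbabilityMeasure X → ProbabilityMeasure (X × U) → ProbabilityMeasure X)
    (pol : ℕ → X0 × ProbabilityMeasure X → ProbabilityMeasure (X × U) × U0)
    (s0 : X0 × ProbabilityMeasure X) : ℕ → Measure (X0 × ProbabilityMeasure X)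
  | 0 => Measure.dirac s0
  | t + 1 => (m3Law p0 T pol s0 t).bind fun s =>
      ((p0 s.1 (pol t s).2 s.2 : Measure X0)).map fun y =>
        (y, T s.1 (pol t s).2 s.2 (pol t s).1)

/-! On a compact space the Kantorovich distance `W₁` metrizes weak convergence, so probability
measures form a compact metric space and the Lipschitz assumptions become Lipschitz continuity of
one step of the dynamics. The states `(x⁰, μ^N)` of the `N`-agent system and `(x⁰, μ)` of the
limiting one are Markov chains whose transitions differ by the `W₁` deviation of an empirical
measure of independent points from its mean. This deviation tends to zero uniformly by
compactness of the set of `1`-Lipschitz functions; Lipschitz continuity propagates the error over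
finitely many steps and discounting controls the tail, so `J^N → J` uniformly over equi-Lipschitz
policies. In the limiting problem a major policy that randomizes is dominated, up to any `ε`, by a
measurable selection of nearly maximizing actions, so optimality among deterministic policies is
optimality among all pairs in `Π × Π⁰`; uniform convergence transfers it to the `N`-agent system. -/

open Filter Topology ProbabilityTheory BoundedContinuousFunction
open scoped NNReal

namespace M3FC

section Kantorovich

variable {X : Type*} [PseudoMetricSpace X]

lemma isCompact_setOf_lipschitzWith_one_eq_zero [CompactSpace X] (a : X) :
    IsCompact {f : X →ᵇ ℝ | LipschitzWith 1 f ∧ f a = 0} := by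
  refine arzela_ascoli₂ (Metric.closedBall 0 (Metric.diam (Set.univ : Set X)))
    (isCompact_closedBall _ _) _ ?_ ?_ ?_
  · simp only [lipschitzWith_iff_dist_le_mul, Set.ofPred_and, Set.ofPred_forall]
    refine IsClosed.inter (isClosed_iInter fun x => isClosed_iInter fun y => ?_) ?_
    · exact isClosed_le (by fun_prop) continuous_const
    · exact isClosed_eq (by fun_prop) continuous_const
  · rintro f x ⟨hf, ha⟩
    rw [Metric.mem_closedBall, ← ha]
    refine (hf.dist_le_mul x a).trans ?_
    simpa using
      Metric.dist_le_diam_of_mem isCompact_univ.isBounded (Set.mem_univ x) (Set.mem_univ a)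
  · exact (LipschitzWith.uniformEquicontinuous _ 1 fun f => f.2.1).equicontinuous

lemma exists_finset_lipschitz_net [CompactSpace X] {δ : ℝ} (hδ : 0 < δ) :
    ∃ s : Finset (X →ᵇ ℝ), (∀ g ∈ s, LipschitzWith 1 g) ∧
      ∀ f : X → ℝ, LipschitzWith 1 f → ∃ g ∈ s, ∃ c : ℝ, ∀ x, |f x - (g x + c)| ≤ δ := by
  rcases isEmpty_or_nonempty X with _ | ⟨⟨a⟩⟩
  · exact ⟨{0}, fun g _ => .of_dist_le_mul fun x => isEmptyElim x,
      fun f _ => ⟨0, Finset.mem_singleton_self 0, 0, fun x => isEmptyElim x⟩⟩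
  obtain ⟨t, htS, htf, hcov⟩ :=
    (isCompact_setOf_lipschitzWith_one_eq_zero a).finite_cover_balls hδ
  refine ⟨htf.toFinset, fun g hg => (htS (htf.mem_toFinset.1 hg)).1, fun f hf => ?_⟩
  let f₀ : X →ᵇ ℝ := mkOfCompact ⟨fun x => f x - f a, hf.continuous.sub continuous_const⟩
  have hf₀ : f₀ ∈ {f : X →ᵇ ℝ | LipschitzWith 1 f ∧ f a = 0} :=
    ⟨.of_dist_le_mul fun x y => by simpa [f₀] using hf.dist_le_mul x y, by simp [f₀]⟩
  obtain ⟨g, hgt, hg⟩ := Set.mem_iUnion₂.1 (hcov hf₀)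
  refine ⟨g, htf.mem_toFinset.2 hgt, f a, fun x => ?_⟩
  have hdist := (dist_coe_le_dist x).trans (Metric.mem_ball.1 hg).le
  simpa [f₀, Real.dist_eq, sub_sub, add_comm] using hdist

variable [MeasurableSpace X]

lemma W1_le {μ ν : ProbabilityMeasure X} {c : ℝ} (h : ∀ f : X → ℝ, LipschitzWith 1 f →
    |∫ x, f x ∂(μ : Measure X) - ∫ x, f x ∂(ν : Measure X)| ≤ c) : W1 μ ν ≤ c :=
  have : Nonempty {f : X → ℝ // LipschitzWith 1 f} := ⟨⟨fun _ => 0, LipschitzWith.const' 0⟩⟩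
  ciSup_le fun f => h f.1 f.2

lemma W1_self (μ : ProbabilityMeasure X) : W1 μ μ = 0 := by
  simp [W1]

lemma W1_comm (μ ν : ProbabilityMeasure X) : W1 μ ν = W1 ν μ := by
  simp only [W1, abs_sub_comm]

variable [CompactSpace X] [BorelSpace X]

lemma integrable_of_continuous {f : X → ℝ} (hf : Continuous f) (μ : Measure X)
    [IsFiniteMeasure μ] : Integrable f μ :=
  hf.integrable_of_hasCompactSupport (HasCompactSupport.of_compactSpace f)

lemma abs_integral_sub_apply_le_diam {f : X → ℝ} (hf : LipschitzWith 1 f)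
    (μ : ProbabilityMeasure X) (a : X) :
    |∫ x, f x ∂(μ : Measure X) - f a| ≤ Metric.diam (Set.univ : Set X) := by
  have hsub : ∫ x, f x ∂(μ : Measure X) - f a = ∫ x, (f x - f a) ∂(μ : Measure X) := by
    rw [integral_sub (integrable_of_continuous hf.continuous _) (integrable_const _)]
    simp
  rw [hsub, ← Real.norm_eq_abs]
  refine (norm_integral_le_of_norm_le_const (.of_forall fun x => ?_)).trans_eq
    (by simp : Metric.diam (Set.univ : Set X) * (μ : Measure X).real Set.univ = _)
  rw [← dist_eq_norm]
  refine (hf.dist_le_mul x a).trans ?_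
  simpa using Metric.dist_le_diam_of_mem isCompact_univ.isBounded (Set.mem_univ x) (Set.mem_univ a)

lemma abs_integral_sub_le_W1 {f : X → ℝ} (hf : LipschitzWith 1 f) (μ ν : ProbabilityMeasure X) :
    |∫ x, f x ∂(μ : Measure X) - ∫ x, f x ∂(ν : Measure X)| ≤ W1 μ ν := by
  obtain ⟨a⟩ := μ.nonempty
  refine le_ciSup (f := fun f : {f : X → ℝ // LipschitzWith 1 f} =>
    |∫ x, f.1 x ∂(μ : Measure X) - ∫ x, f.1 x ∂(ν : Measure X)|)
    ⟨Metric.diam (Set.univ : Set X) + Metric.diam (Set.univ : Set X), ?_⟩ ⟨f, hf⟩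
  rintro _ ⟨g, rfl⟩
  refine (abs_sub_le _ (g.1 a) _).trans (add_le_add ?_ ?_)
  · exact abs_integral_sub_apply_le_diam g.2 μ a
  · rw [abs_sub_comm]
    exact abs_integral_sub_apply_le_diam g.2 ν a

lemma abs_integral_sub_le_mul_W1 {K : ℝ≥0} {f : X → ℝ} (hf : LipschitzWith K f)
    (μ ν : ProbabilityMeasure X) :
    |∫ x, f x ∂(μ : Measure X) - ∫ x, f x ∂(ν : Measure X)| ≤ K * W1 μ ν := by
  rcases eq_or_ne K 0 with rfl | hK
  · obtain ⟨a⟩ := μ.nonempty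
    have hconst : ∀ x, f x = f a := fun x => dist_le_zero.1 (by simpa using hf.dist_le_mul x a)
    simp [hconst]
  · have hunit : LipschitzWith 1 fun x => (K : ℝ)⁻¹ * f x := .of_dist_le_mul fun x y => by
      rw [Real.dist_eq, ← mul_sub, abs_mul, abs_of_nonneg (by positivity), NNReal.coe_one, one_mul,
        inv_mul_le_iff₀ (by positivity)]
      exact hf.dist_le_mul x y
    have h := abs_integral_sub_le_W1 hunit μ ν
    rwa [integral_const_mul, integral_const_mul, ← mul_sub, abs_mul,
      abs_of_nonneg (by positivity), inv_mul_le_iff₀ (by positivity)] at h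

lemma W1_triangle (μ ν ρ : ProbabilityMeasure X) : W1 μ ρ ≤ W1 μ ν + W1 ν ρ :=
  W1_le fun _ hf => (abs_sub_le _ _ _).trans
    (add_le_add (abs_integral_sub_le_W1 hf μ ν) (abs_integral_sub_le_W1 hf ν ρ))

lemma exists_finset_W1_le {δ : ℝ} (hδ : 0 < δ) :
    ∃ s : Finset (X →ᵇ ℝ), (∀ g ∈ s, LipschitzWith 1 g) ∧ ∀ μ ν : ProbabilityMeasure X,
      W1 μ ν ≤ δ + ∑ g ∈ s, |∫ x, g x ∂(μ : Measure X) - ∫ x, g x ∂(ν : Measure X)| := by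
  obtain ⟨s, hs, hnet⟩ := exists_finset_lipschitz_net (X := X) (half_pos hδ)
  refine ⟨s, hs, fun μ ν => W1_le fun f hf => ?_⟩
  obtain ⟨g, hg, c, hfg⟩ := hnet f hf
  have hint : ∀ ρ : ProbabilityMeasure X,
      |∫ x, f x ∂(ρ : Measure X) - (∫ x, g x ∂(ρ : Measure X) + c)| ≤ δ / 2 := fun ρ => by
    have hsub : ∫ x, (f x - (g x + c)) ∂(ρ : Measure X)
        = ∫ x, f x ∂(ρ : Measure X) - (∫ x, g x ∂(ρ : Measure X) + c) := by
      have hgc : Integrable (fun x => g x + c) (ρ : Measure X) :=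
        (g.integrable _).add (integrable_const c)
      rw [integral_sub (integrable_of_continuous hf.continuous _) hgc,
        integral_add (g.integrable _) (integrable_const c)]
      simp
    rw [← hsub, ← Real.norm_eq_abs]
    exact (norm_integral_le_of_norm_le_const (.of_forall hfg)).trans_eq (by simp)
  have hsum := Finset.single_le_sum (f := fun g : X →ᵇ ℝ =>
    |∫ x, g x ∂(μ : Measure X) - ∫ x, g x ∂(ν : Measure X)|) (fun _ _ => abs_nonneg _) hg
  have hμ := abs_le.1 (hint μ)
  have hν := abs_le.1 (hint ν)
  have hμν := abs_le.1 (le_refl |∫ x, g x ∂(μ : Measure X) - ∫ x, g x ∂(ν : Measure X)|)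
  rw [abs_le]
  constructor <;> linarith

lemma tendsto_W1_of_tendsto {ι : Type*} {l : Filter ι} {μs : ι → ProbabilityMeasure X}
    {μ : ProbabilityMeasure X} (h : Tendsto μs l (𝓝 μ)) :
    Tendsto (fun i => W1 (μs i) μ) l (𝓝 0) := by
  have hnonneg : ∀ ν : ProbabilityMeasure X, 0 ≤ W1 ν μ := fun ν =>
    (abs_nonneg _).trans (abs_integral_sub_le_W1 (LipschitzWith.const' (0 : ℝ)) ν μ)
  rw [Metric.tendsto_nhds]
  intro ε hε
  obtain ⟨s, -, hs⟩ := exists_finset_W1_le (X := X) (half_pos hε)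
  have hsum : Tendsto (fun i => ∑ g ∈ s,
      |∫ x, g x ∂(μs i : Measure X) - ∫ x, g x ∂(μ : Measure X)|) l (𝓝 0) := by
    rw [← Finset.sum_const_zero (s := s)]
    refine tendsto_finsetSum s fun g _ => ?_
    have hg := (ProbabilityMeasure.tendsto_iff_forall_integral_tendsto.1 h g).sub_const
      (∫ x, g x ∂(μ : Measure X))
    simpa using hg.abs
  filter_upwards [hsum.eventually_lt_const (half_pos hε)] with i hi
  rw [Real.dist_0_eq_abs, abs_of_nonneg (hnonneg _)]
  linarith [hs (μs i) μ]

lemma nhds_eq_comap_W1 (μ : ProbabilityMeasure X) : 𝓝 μ = comap (fun ν => W1 ν μ) (𝓝 0) := by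
  refine le_antisymm (tendsto_iff_comap.1 (tendsto_W1_of_tendsto tendsto_id)) ?_
  refine (tendsto_iff_forall_lipschitz_integral_tendsto (F := comap (fun ν => W1 ν μ) (𝓝 0))
    (μs := id)).2 ?_
  rintro f - ⟨K, hf⟩
  refine tendsto_iff_norm_sub_tendsto_zero.2 (squeeze_zero (fun _ => norm_nonneg _)
    (fun ν => abs_integral_sub_le_mul_W1 hf ν μ) ?_)
  simpa using (tendsto_comap (f := fun ν => W1 ν μ) (x := 𝓝 0)).const_mul (K : ℝ)

/-- The Wasserstein pseudometric; its topology is definitionally that of weak convergence. -/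
noncomputable instance : PseudoMetricSpace (ProbabilityMeasure X) :=
  letI m : PseudoMetricSpace (ProbabilityMeasure X) :=
    { dist := W1
      dist_self := W1_self
      dist_comm := W1_comm
      dist_triangle := W1_triangle }
  m.replaceTopology (TopologicalSpace.ext_nhds fun μ => by
    rw [nhds_eq_comap_W1, ← nhds_comap_dist (α := ProbabilityMeasure X)]
    rfl)

lemma dist_integral_le_dist (f g : C(X, ℝ)) (μ : Measure X) [IsProbabilityMeasure μ] :
    dist (∫ x, f x ∂μ) (∫ x, g x ∂μ) ≤ dist f g := by
  rw [dist_eq_norm, ← integral_sub (integrable_of_continuous f.continuous μ)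
    (integrable_of_continuous g.continuous μ)]
  refine (norm_integral_le_of_norm_le_const (.of_forall fun x => ?_)).trans_eq
    (by simp : dist f g * μ.real Set.univ = _)
  rw [← dist_eq_norm]
  exact ContinuousMap.dist_apply_le_dist x

omit [CompactSpace X] in
lemma measurable_integral_probabilityMeasure {f : X → ℝ} (hf : Continuous f) :
    Measurable fun μ : ProbabilityMeasure X => ∫ x, f x ∂(μ : Measure X) := by
  let κ : Kernel (ProbabilityMeasure X) X := ⟨fun μ => μ, measurable_subtype_coe⟩
  exact (hf.measurable.stronglyMeasurable.integral_kernel (κ := κ)).measurable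

omit [CompactSpace X] in
lemma measurable_toMeasure_of_continuous {S : Type*} [TopologicalSpace S] [MeasurableSpace S]
    [OpensMeasurableSpace S] {κ : S → ProbabilityMeasure X} (hκ : Continuous κ) :
    Measurable fun s => (κ s : Measure X) := by
  refine .measure_of_isPiSystem_of_isProbabilityMeasure
    (BorelSpace.measurable_eq.trans borel_eq_generateFrom_isClosed) isPiSystem_isClosed
    fun F hF => ?_
  exact measurable_of_tendsto_metrizable (fun n =>
    ((ProbabilityMeasure.continuous_lintegral_boundedContinuousFunction _).comp hκ).measurable)
    (tendsto_pi_nhds.2 fun s => HasOuterApproxClosed.tendsto_lintegral_apprSeq hF (κ s))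

omit [CompactSpace X] in
lemma probabilityMeasure_le_borel :
    (inferInstance : MeasurableSpace (ProbabilityMeasure X)) ≤ borel (ProbabilityMeasure X) :=
  measurable_iff_comap_le.1 (@measurable_toMeasure_of_continuous X _ _ _ _ _ (borel _)
    (@OpensMeasurableSpace.mk _ _ (borel _) le_rfl) id continuous_id)

end Kantorovich

section Wasserstein

variable {X : Type*} [MetricSpace X] [MeasurableSpace X] [CompactSpace X] [BorelSpace X]

/-- The Wasserstein metric: the weak topology separates probability measures. -/
noncomputable instance : MetricSpace (ProbabilityMeasure X) := .ofT0PseudoMetricSpace _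

lemma borel_probabilityMeasure_le :
    borel (ProbabilityMeasure X) ≤ (inferInstance : MeasurableSpace (ProbabilityMeasure X)) := by
  let F : ProbabilityMeasure X → ℕ → ℝ := fun μ n =>
    ∫ x, TopologicalSpace.denseSeq C(X, ℝ) n x ∂(μ : Measure X)
  have hcont : Continuous F :=
    continuous_pi fun n => ProbabilityMeasure.continuous_integral_continuousMap _
  have hinj : Function.Injective F := fun μ ν h => by
    have hint (ρ : ProbabilityMeasure X) :
        Continuous fun f : C(X, ℝ) => ∫ x, f x ∂(ρ : Measure X) :=
      (LipschitzWith.of_dist_le' (K := 1) fun f g => by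
        simpa using dist_integral_le_dist f g ρ).continuous
    have heq := (TopologicalSpace.denseRange_denseSeq C(X, ℝ)).equalizer (hint μ) (hint ν) h
    exact Subtype.ext (ext_of_forall_integral_eq_of_IsFiniteMeasure (μ := (μ : Measure X))
      (ν := (ν : Measure X)) fun f => congrFun heq f.toContinuousMap)
  rw [(hcont.isClosedEmbedding hinj).isInducing.eq_induced, borel_comap,
    ← (inferInstance : BorelSpace (ℕ → ℝ)).measurable_eq, ← measurable_iff_comap_le]
  exact measurable_pi_lambda F fun n =>
    measurable_integral_probabilityMeasure (TopologicalSpace.denseSeq C(X, ℝ) n).continuous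

instance : BorelSpace (ProbabilityMeasure X) where
  measurable_eq := le_antisymm probabilityMeasure_le_borel borel_probabilityMeasure_le

end Wasserstein

section Mixture

variable {S Y W : Type*} [MeasurableSpace S] [MeasurableSpace Y] [MeasurableSpace W]

open Classical in
/-- The mixture `∫ κ(s) μ(ds)` of the probability measures `κ s`. It is meant for measurable `κ`;
otherwise `Measure.bind` need not be a probability measure, and the value is then arbitrary. -/
noncomputable def mixture (μ : ProbabilityMeasure S) (κ : S → ProbabilityMeasure Y) :
    ProbabilityMeasure Y :=
  if h : IsProbabilityMeasure ((μ : Measure S).bind fun s => (κ s : Measure Y)) then ⟨_, h⟩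
  else κ μ.nonempty.some

variable {κ : S → ProbabilityMeasure Y} {η : Y → ProbabilityMeasure W}

lemma coe_mixture (hκ : Measurable κ) (μ : ProbabilityMeasure S) :
    (mixture μ κ : Measure Y) = (μ : Measure S).bind fun s => (κ s : Measure Y) := by
  have hprob : IsProbabilityMeasure ((μ : Measure S).bind fun s => (κ s : Measure Y)) :=
    isProbabilityMeasure_bind (measurable_subtype_coe.comp hκ).aemeasurable
      (.of_forall fun s => (κ s).2)
  exact congrArg Subtype.val (dif_pos hprob)

lemma integral_mixture (hκ : Measurable κ) {μ : ProbabilityMeasure S} {f : Y → ℝ}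
    (hf : Integrable f (mixture μ κ : Measure Y)) :
    ∫ y, f y ∂(mixture μ κ : Measure Y) = ∫ s, ∫ y, f y ∂(κ s : Measure Y) ∂(μ : Measure S) := by
  rw [coe_mixture hκ] at hf ⊢
  let k : Kernel S Y := ⟨fun s => κ s, measurable_subtype_coe.comp hκ⟩
  exact Kernel.integral_comp (κ := Kernel.const Unit (μ : Measure S)) (η := k) (a := ()) hf

lemma measurable_mixture (hκ : Measurable κ) (hη : Measurable η) :
    Measurable fun s => mixture (κ s) η := by
  refine Measurable.subtype_mk (f := fun s => (mixture (κ s) η : Measure W)) ?_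
  simp only [coe_mixture hη]
  exact (Measure.measurable_bind' (measurable_subtype_coe.comp hη)).comp
    (measurable_subtype_coe.comp hκ)

lemma mixture_mixture (hκ : Measurable κ) (hη : Measurable η) (μ : ProbabilityMeasure S) :
    mixture (mixture μ κ) η = mixture μ fun s => mixture (κ s) η := by
  apply ProbabilityMeasure.toMeasure_injective
  rw [coe_mixture hη, coe_mixture hκ, coe_mixture (measurable_mixture hκ hη)]
  simp only [coe_mixture hη]
  exact Measure.bind_bind (measurable_subtype_coe.comp hκ).aemeasurable
    (measurable_subtype_coe.comp hη).aemeasurable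

lemma measurable_diracProba : Measurable (diracProba : Y → ProbabilityMeasure Y) :=
  Measure.measurable_dirac.subtype_mk

lemma mixture_diracProba_comp {f : S → Y} (hf : Measurable f) (μ : ProbabilityMeasure S) :
    mixture μ (fun s => diracProba (f s)) = μ.map hf.aemeasurable :=
  Subtype.ext ((coe_mixture (measurable_diracProba.comp hf) μ).trans
    (Measure.bind_dirac_eq_map _ hf))

lemma measurable_map {f : Y → W} (hκ : Measurable κ) (hf : Measurable f) :
    Measurable fun s => (κ s).map hf.aemeasurable := by
  simp only [← mixture_diracProba_comp hf]
  exact measurable_mixture hκ (measurable_diracProba.comp hf)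

lemma map_mixture {f : Y → W} (hκ : Measurable κ) (hf : Measurable f) (μ : ProbabilityMeasure S) :
    (mixture μ κ).map hf.aemeasurable = mixture μ fun s => (κ s).map hf.aemeasurable := by
  simp only [← mixture_diracProba_comp hf]
  exact mixture_mixture hκ (measurable_diracProba.comp hf) μ

lemma bind_map (μ : Measure S) {f : S → Y} (hf : Measurable f) {g : Y → Measure W}
    (hg : Measurable g) : (μ.map f).bind g = μ.bind fun s => g (f s) := by
  rw [Measure.bind, Measure.bind, Measure.map_map hg hf]
  rfl

lemma mixture_map {f : S → Y} (hf : Measurable f) (hη : Measurable η) (μ : ProbabilityMeasure S) :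
    mixture (μ.map hf.aemeasurable) η = mixture μ fun s => η (f s) := by
  apply ProbabilityMeasure.toMeasure_injective
  rw [coe_mixture hη, coe_mixture (κ := fun s => η (f s)) (hη.comp hf)]
  exact bind_map _ hf (measurable_subtype_coe.comp hη)

end Mixture

section Transport

variable {S Y W : Type*} [PseudoMetricSpace S]
  [MetricSpace Y] [MeasurableSpace Y] [MetricSpace W] [CompactSpace W] [MeasurableSpace W]

lemma lipschitzWith_diracProba [CompactSpace Y] [BorelSpace Y] :
    LipschitzWith 1 (diracProba : Y → ProbabilityMeasure Y) :=
  .of_dist_le_mul fun y y' => W1_le fun f hf => by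
    simpa [diracProba, Real.dist_eq] using hf.dist_le_mul y y'

variable [CompactSpace Y] [BorelSpace Y] [BorelSpace W]

lemma lipschitzWith_integral {K L : ℝ≥0} {κ : S → ProbabilityMeasure Y} {F : S × Y → ℝ}
    (hκ : LipschitzWith K κ) (hF : LipschitzWith L F) :
    LipschitzWith (L * (1 + K)) fun s => ∫ y, F (s, y) ∂(κ s : Measure Y) := by
  refine .of_dist_le_mul fun s s' => ?_
  have hleft (s) : LipschitzWith L fun y => F (s, y) := by
    simpa [Function.comp_def] using hF.comp (LipschitzWith.prodMk_left s)
  have hint (s s') : Integrable (fun y => F (s, y)) (κ s' : Measure Y) :=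
    integrable_of_continuous (hleft s).continuous _
  have hvary : |∫ y, F (s, y) ∂(κ s : Measure Y) - ∫ y, F (s', y) ∂(κ s : Measure Y)|
      ≤ L * dist s s' := by
    rw [← integral_sub (hint s s) (hint s' s), ← Real.norm_eq_abs]
    refine (norm_integral_le_of_norm_le_const (.of_forall fun y => ?_)).trans_eq
      (by simp : L * dist s s' * (κ s : Measure Y).real Set.univ = _)
    simpa [dist_eq_norm] using hF.dist_le_mul (s, y) (s', y)
  calc |∫ y, F (s, y) ∂(κ s : Measure Y) - ∫ y, F (s', y) ∂(κ s' : Measure Y)|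
      ≤ L * dist s s' + L * W1 (κ s) (κ s') :=
        (abs_sub_le _ _ _).trans (add_le_add hvary (abs_integral_sub_le_mul_W1 (hleft s') _ _))
    _ ≤ L * dist s s' + L * (K * dist s s') := by
        gcongr
        exact hκ.dist_le_mul s s'
    _ = _ := by push_cast; ring

lemma lipschitzWith_mixture {K L : ℝ≥0} {κ : S → ProbabilityMeasure Y}
    {η : S → Y → ProbabilityMeasure W} (hκ : LipschitzWith K κ) (hη : LipschitzWith L ↿η) :
    LipschitzWith (L * (1 + K)) fun s => mixture (κ s) (η s) := by
  refine .of_dist_le_mul fun s s' => W1_le fun f hf => ?_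
  have hηs (s) : Measurable (η s) :=
    (hη.continuous.comp (Continuous.prodMk_right s)).measurable
  have hF : LipschitzWith L fun z : S × Y => ∫ w, f w ∂(η z.1 z.2 : Measure W) :=
    .of_dist_le_mul fun z z' =>
      (abs_integral_sub_le_W1 hf _ _).trans (hη.dist_le_mul z z')
  rw [integral_mixture (hηs s) (integrable_of_continuous hf.continuous _),
    integral_mixture (hηs s') (integrable_of_continuous hf.continuous _)]
  exact (lipschitzWith_integral hκ hF).dist_le_mul s s'

variable {T : Type*} [TopologicalSpace T]

lemma continuous_integral {κ : T → ProbabilityMeasure Y} {F : T × Y → ℝ}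
    (hκ : Continuous κ) (hF : Continuous F) :
    Continuous fun s => ∫ y, F (s, y) ∂(κ s : Measure Y) := by
  have hpair : Continuous fun z : C(Y, ℝ) × ProbabilityMeasure Y => ∫ y, z.1 y ∂(z.2 : Measure Y) :=
    continuous_prod_of_continuous_lipschitzWith _ 1
      (fun f => ProbabilityMeasure.continuous_integral_continuousMap f)
      fun μ => .of_dist_le_mul fun f g => by simpa using dist_integral_le_dist f g (μ : Measure Y)
  exact hpair.comp ((ContinuousMap.curry ⟨F, hF⟩).continuous.prodMk hκ)

lemma continuous_mixture {κ : T → ProbabilityMeasure Y}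
    {η : T → Y → ProbabilityMeasure W} (hκ : Continuous κ) (hη : Continuous ↿η) :
    Continuous fun s => mixture (κ s) (η s) := by
  have hηs (s) : Measurable (η s) := (hη.comp (Continuous.prodMk_right s)).measurable
  refine ProbabilityMeasure.continuous_iff_forall_continuousMap_continuous_integral.2 fun f => ?_
  simp only [integral_mixture (hηs _) (integrable_of_continuous f.continuous _)]
  exact continuous_integral hκ
    ((ProbabilityMeasure.continuous_integral_continuousMap f).comp hη)

variable {A : Type*} [MeasurableSpace A]

lemma dist_mixture_le_of_dist_le {κ κ' : A → ProbabilityMeasure Y} (hκ : Measurable κ)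
    (hκ' : Measurable κ') {δ : ℝ} (h : ∀ a, dist (κ a) (κ' a) ≤ δ) (P : ProbabilityMeasure A) :
    dist (mixture P κ) (mixture P κ') ≤ δ := by
  refine W1_le fun f hf => ?_
  have hint {κ : A → ProbabilityMeasure Y} (hκ : Measurable κ) :
      Integrable (fun a => ∫ y, f y ∂(κ a : Measure Y)) (P : Measure A) := by
    let k : C(Y, ℝ) := ⟨f, hf.continuous⟩
    exact (integrable_of_continuous (ProbabilityMeasure.continuous_integral_continuousMap k)
      ((P : Measure A).map κ)).comp_measurable hκ
  rw [integral_mixture hκ (integrable_of_continuous hf.continuous _),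
    integral_mixture hκ' (integrable_of_continuous hf.continuous _),
    ← integral_sub (hint hκ) (hint hκ'), ← Real.norm_eq_abs]
  exact (norm_integral_le_of_norm_le_const (.of_forall fun a =>
    (abs_integral_sub_le_W1 hf _ _).trans (h a))).trans_eq (by simp)

lemma dist_mixture_left_le {K : ℝ≥0} {η : Y → ProbabilityMeasure W} (hη : LipschitzWith K η)
    (μ ν : ProbabilityMeasure Y) : dist (mixture μ η) (mixture ν η) ≤ K * dist μ ν := by
  refine W1_le fun f hf => ?_
  rw [integral_mixture hη.continuous.measurable (integrable_of_continuous hf.continuous _),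
    integral_mixture hη.continuous.measurable (integrable_of_continuous hf.continuous _)]
  have hlip : LipschitzWith K fun y => ∫ w, f w ∂(η y : Measure W) :=
    .of_dist_le_mul fun y y' => (abs_integral_sub_le_W1 hf _ _).trans (hη.dist_le_mul y y')
  exact abs_integral_sub_le_mul_W1 hlip μ ν

end Transport

section Chain

variable {A W : Type*} [MeasurableSpace A] [MeasurableSpace W]

/-- The law at each time of the inhomogeneous Markov chain with initial law `ι` and transition
kernel `κ t` from time `t` to time `t + 1`. -/
noncomputable def chainLaw (ι : ProbabilityMeasure A) (κ : ℕ → A → ProbabilityMeasure A) :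
    ℕ → ProbabilityMeasure A
  | 0 => ι
  | t + 1 => mixture (chainLaw ι κ t) (κ t)

/-- The expected discounted return of a Markov chain with running rewards `R t`. -/
noncomputable def discountedReturn (γ : ℝ) (ι : ProbabilityMeasure A)
    (κ : ℕ → A → ProbabilityMeasure A) (R : ℕ → A → ℝ) : ℝ :=
  ∑' t, γ ^ t * ∫ a, R t a ∂(chainLaw ι κ t : Measure A)

lemma chainLaw_succ (ι : ProbabilityMeasure A) (κ : ℕ → A → ProbabilityMeasure A) (t : ℕ) :
    chainLaw ι κ (t + 1) = mixture (chainLaw ι κ t) (κ t) := rfl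

lemma eq_mixture_chainLaw {ι : ProbabilityMeasure A} {σ : ℕ → A → ProbabilityMeasure W}
    {θ : ℕ → W → ProbabilityMeasure A} (hσ : ∀ t, Measurable (σ t)) (hθ : ∀ t, Measurable (θ t))
    {L : ℕ → Measure W} (hzero : L 0 = (ι : Measure A).bind fun a => (σ 0 a : Measure W))
    (hsucc : ∀ t, L (t + 1) = (L t).bind fun w =>
      (θ t w : Measure A).bind fun a => (σ (t + 1) a : Measure W)) (t : ℕ) :
    L t = mixture (chainLaw ι (fun t a => mixture (σ t a) (θ t)) t) (σ t) := by
  induction t with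
  | zero => rw [hzero, coe_mixture (hσ 0), chainLaw]
  | succ t ih =>
    have hθσ := measurable_mixture (hθ t) (hσ (t + 1))
    rw [chainLaw_succ, ← mixture_mixture (hσ t) (hθ t), mixture_mixture (hθ t) (hσ (t + 1)),
      coe_mixture hθσ, ← ih, hsucc]
    simp only [coe_mixture (hσ (t + 1))]

lemma eq_chainLaw {ι : ProbabilityMeasure A} {κ : ℕ → A → ProbabilityMeasure A}
    (hκ : ∀ t, Measurable (κ t)) {L : ℕ → Measure A} (hzero : L 0 = ι)
    (hsucc : ∀ t, L (t + 1) = (L t).bind fun a => (κ t a : Measure A)) (t : ℕ) :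
    L t = chainLaw ι κ t := by
  induction t with
  | zero => exact hzero
  | succ t ih => rw [hsucc, ih, chainLaw_succ, coe_mixture (hκ t)]

variable {V : Type*} [MeasurableSpace V]

lemma measurable_map_prodMk {ρ : A → ProbabilityMeasure V} (hρ : Measurable ρ) {f : A × V → W}
    (hf : Measurable f) : Measurable fun a => (ρ a : Measure V).map fun v => f (a, v) := by
  let k : Kernel A V := ⟨fun a => ρ a, measurable_subtype_coe.comp hρ⟩
  have : IsMarkovKernel k := ⟨fun a => (ρ a).2⟩
  convert ((Kernel.id ×ₖ k).map f).measurable using 2 with a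
  rw [Kernel.map_apply _ hf, Kernel.prod_apply, Kernel.id_apply, Measure.dirac_prod,
    Measure.map_map hf measurable_prodMk_left]
  rfl

lemma tsum_integral_eq_discountedReturn (γ : ℝ) (e : A × V ≃ᵐ W) {ι : ProbabilityMeasure A}
    {ρ : ℕ → A → ProbabilityMeasure V} {η : ℕ → A → V → ProbabilityMeasure A}
    (hρ : ∀ t, Measurable (ρ t)) (hη : ∀ t, Measurable ↿(η t)) {L : ℕ → Measure W}
    (hzero : L 0 = (ι : Measure A).bind fun a => (ρ 0 a : Measure V).map fun v => e (a, v))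
    (hsucc : ∀ t, L (t + 1) = (L t).bind fun w => (η t (e.symm w).1 (e.symm w).2 : Measure A).bind
      fun a => (ρ (t + 1) a : Measure V).map fun v => e (a, v))
    {F : W → ℝ} (hF : ∀ P : ProbabilityMeasure W, Integrable F (P : Measure W)) :
    ∑' t, γ ^ t * ∫ w, F w ∂(L t) = discountedReturn γ ι (fun t a => mixture (ρ t a) (η t a))
      fun t a => ∫ v, F (e (a, v)) ∂(ρ t a : Measure V) := by
  have he (a : A) : Measurable fun v => e (a, v) := e.measurable.comp measurable_prodMk_left
  let σ (t : ℕ) (a : A) : ProbabilityMeasure W := (ρ t a).map (he a).aemeasurable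
  let θ (t : ℕ) (w : W) : ProbabilityMeasure A := η t (e.symm w).1 (e.symm w).2
  have hσ (t) : Measurable (σ t) := (measurable_map_prodMk (hρ t) e.measurable).subtype_mk
  have hθ (t) : Measurable (θ t) := (hη t).comp e.symm.measurable
  have hkernel (t a) : mixture (σ t a) (θ t) = mixture (ρ t a) (η t a) :=
    (mixture_map (he a) (hθ t) _).trans (by simp [θ])
  have hL := eq_mixture_chainLaw hσ hθ hzero hsucc
  simp only [hkernel] at hL
  refine tsum_congr fun t => ?_
  rw [hL, integral_mixture (hσ t) (hF _)]
  congr! with a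
  exact integral_map (he a).aemeasurable (hF (σ t a)).aestronglyMeasurable

lemma dist_chainLaw_le {Z : Type*} [MetricSpace Z] [CompactSpace Z] [MeasurableSpace Z]
    [BorelSpace Z] {ι : ProbabilityMeasure A} {κ : ℕ → A → ProbabilityMeasure A}
    {ι' : ProbabilityMeasure Z} {η : ℕ → Z → ProbabilityMeasure Z} {f : A → Z} {K : ℝ≥0} {δ : ℝ}
    (hκ : ∀ t, Measurable (κ t)) (hf : Measurable f) (hη : ∀ t, LipschitzWith K (η t))
    (hinit : dist (ι.map hf.aemeasurable) ι' ≤ δ)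
    (hstep : ∀ t a, dist ((κ t a).map hf.aemeasurable) (η t (f a)) ≤ δ) (t : ℕ) :
    dist ((chainLaw ι κ t).map hf.aemeasurable) (chainLaw ι' η t)
      ≤ (∑ i ∈ Finset.range (t + 1), (K : ℝ) ^ i) * δ := by
  induction t with
  | zero => simpa [chainLaw] using hinit
  | succ t ih =>
    have hηt : Measurable (η t) := (hη t).continuous.measurable
    calc dist ((chainLaw ι κ (t + 1)).map hf.aemeasurable) (chainLaw ι' η (t + 1))
        ≤ dist (mixture (chainLaw ι κ t) fun a => (κ t a).map hf.aemeasurable)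
              (mixture (chainLaw ι κ t) fun a => η t (f a))
            + dist (mixture ((chainLaw ι κ t).map hf.aemeasurable) (η t))
              (mixture (chainLaw ι' η t) (η t)) := by
          rw [chainLaw_succ, chainLaw_succ, map_mixture (hκ t) hf, mixture_map hf hηt]
          exact dist_triangle _ _ _
      _ ≤ δ + K * ((∑ i ∈ Finset.range (t + 1), (K : ℝ) ^ i) * δ) := by
          gcongr
          · exact dist_mixture_le_of_dist_le (measurable_map (hκ t) hf) (hηt.comp hf) (hstep t) _
          · exact (dist_mixture_left_le (hη t) _ _).trans (by gcongr)
      _ = (∑ i ∈ Finset.range (t + 1 + 1), (K : ℝ) ^ i) * δ := by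
          rw [geom_sum_succ (n := t + 1)]
          ring

lemma abs_integral_chainLaw_sub_le {Z : Type*} [MetricSpace Z] [CompactSpace Z]
    [MeasurableSpace Z] [BorelSpace Z] {ι : ProbabilityMeasure A}
    {κ : ℕ → A → ProbabilityMeasure A} {ι' : ProbabilityMeasure Z}
    {η : ℕ → Z → ProbabilityMeasure Z} {f : A → Z} {K M : ℝ≥0} {δ : ℝ}
    (hκ : ∀ t, Measurable (κ t)) (hf : Measurable f) (hη : ∀ t, LipschitzWith K (η t))
    (hinit : dist (ι.map hf.aemeasurable) ι' ≤ δ)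
    (hstep : ∀ t a, dist ((κ t a).map hf.aemeasurable) (η t (f a)) ≤ δ) {R : Z → ℝ}
    (hR : LipschitzWith M R) (t : ℕ) :
    |∫ a, R (f a) ∂(chainLaw ι κ t : Measure A) - ∫ z, R z ∂(chainLaw ι' η t : Measure Z)|
      ≤ (M * ∑ i ∈ Finset.range (t + 1), (K : ℝ) ^ i) * δ := by
  rw [← integral_map hf.aemeasurable hR.continuous.aestronglyMeasurable, mul_assoc]
  calc |∫ z, R z ∂((chainLaw ι κ t).map hf.aemeasurable : Measure Z)
          - ∫ z, R z ∂(chainLaw ι' η t : Measure Z)|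
      ≤ M * dist ((chainLaw ι κ t).map hf.aemeasurable) (chainLaw ι' η t) :=
        abs_integral_sub_le_mul_W1 hR _ _
    _ ≤ M * ((∑ i ∈ Finset.range (t + 1), (K : ℝ) ^ i) * δ) := by
        gcongr
        exact dist_chainLaw_le hκ hf hη hinit hstep t

end Chain

section Discounting

lemma abs_integral_le_of_abs_le {A : Type*} [MeasurableSpace A] (μ : ProbabilityMeasure A)
    {f : A → ℝ} {B : ℝ} (hf : ∀ a, |f a| ≤ B) : |∫ a, f a ∂(μ : Measure A)| ≤ B := by
  simpa using norm_integral_le_of_norm_le_const (μ := (μ : Measure A))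
    (.of_forall fun a => (Real.norm_eq_abs _).trans_le (hf a))

lemma integrable_of_abs_le {A : Type*} [MeasurableSpace A] (μ : Measure A) [IsFiniteMeasure μ]
    {f : A → ℝ} {B : ℝ} (hm : Measurable f) (hf : ∀ a, |f a| ≤ B) : Integrable f μ :=
  .of_bound hm.aestronglyMeasurable B (.of_forall hf)

variable {γ : ℝ}

lemma summable_discounted (hγ0 : 0 ≤ γ) (hγ1 : γ < 1) {a : ℕ → ℝ} {B : ℝ}
    (ha : ∀ t, |a t| ≤ B) : Summable fun t => γ ^ t * a t := by
  refine .of_norm_bounded ((summable_geometric_of_lt_one hγ0 hγ1).mul_right B) fun t => ?_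
  rw [Real.norm_eq_abs, abs_mul, abs_of_nonneg (pow_nonneg hγ0 t)]
  gcongr
  exact ha t

lemma le_tsum_discounted_of_le (hγ0 : 0 ≤ γ) (hγ1 : γ < 1) {e c : ℕ → ℝ} {B C : ℝ}
    (he : ∀ t, |e t| ≤ B) (hc : ∀ t, |c t| ≤ C) (h : ∀ t, e t ≤ c t + γ * e (t + 1)) :
    e 0 ≤ ∑' t, γ ^ t * c t := by
  have hpartial (n : ℕ) : e 0 - γ ^ n * e n ≤ ∑ t ∈ Finset.range n, γ ^ t * c t := by
    rw [show e 0 - γ ^ n * e n = γ ^ 0 * e 0 - γ ^ n * e n by simp,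
      ← Finset.sum_range_sub' fun t => γ ^ t * e t]
    refine Finset.sum_le_sum fun t _ => ?_
    rw [pow_succ, mul_assoc, ← mul_sub]
    have := h t
    gcongr
    linarith
  have htail : Tendsto (fun n => γ ^ n * e n) atTop (𝓝 0) :=
    (summable_discounted hγ0 hγ1 he).tendsto_atTop_zero
  simpa using le_of_tendsto_of_tendsto' (htail.const_sub (e 0))
    (summable_discounted hγ0 hγ1 hc).hasSum.tendsto_sum_nat hpartial

lemma tendsto_tsum_discounted_min (hγ0 : 0 ≤ γ) (hγ1 : γ < 1) {c : ℕ → ℝ} (hc : ∀ t, 0 ≤ c t)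
    {B : ℝ} (hB : 0 ≤ B) :
    Tendsto (fun δ => ∑' t, γ ^ t * min (c t * δ) B) (𝓝[>] 0) (𝓝 0) := by
  have hlim (t : ℕ) : Tendsto (fun δ => γ ^ t * min (c t * δ) B) (𝓝[>] 0) (𝓝 0) := by
    have hcont : Continuous fun δ => γ ^ t * min (c t * δ) B := by fun_prop
    simpa [min_eq_left hB] using (hcont.tendsto 0).mono_left nhdsWithin_le_nhds
  have hbound : ∀ᶠ δ in 𝓝[>] (0 : ℝ), ∀ t, ‖γ ^ t * min (c t * δ) B‖ ≤ γ ^ t * B := by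
    filter_upwards [self_mem_nhdsWithin] with δ hδ t
    have hmin : 0 ≤ min (c t * δ) B := le_min (mul_nonneg (hc t) (le_of_lt hδ)) hB
    rw [Real.norm_of_nonneg (by positivity)]
    gcongr
    exact min_le_right _ _
  simpa using tendsto_tsum_of_dominated_convergence
    ((summable_geometric_of_lt_one hγ0 hγ1).mul_right B) hlim hbound

lemma exists_pos_abs_tsum_sub_tsum_le (hγ0 : 0 ≤ γ) (hγ1 : γ < 1) {c : ℕ → ℝ}
    (hc : ∀ t, 0 ≤ c t) {B : ℝ} (hB : 0 ≤ B) {ε : ℝ} (hε : 0 < ε) :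
    ∃ δ > 0, ∀ a b : ℕ → ℝ, (∀ t, |a t| ≤ B) → (∀ t, |b t| ≤ B) →
      (∀ t, |a t - b t| ≤ c t * δ) → |∑' t, γ ^ t * a t - ∑' t, γ ^ t * b t| ≤ ε := by
  obtain ⟨δ, hδε, hδ⟩ := (((tendsto_tsum_discounted_min hγ0 hγ1 hc
    (add_nonneg hB hB)).eventually_le_const hε).and self_mem_nhdsWithin).exists
  refine ⟨δ, hδ, fun a b ha hb hab => le_trans ?_ hδε⟩
  have hmin (t : ℕ) : 0 ≤ min (c t * δ) (B + B) :=
    le_min (mul_nonneg (hc t) (le_of_lt hδ)) (add_nonneg hB hB)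
  have hsum : Summable fun t => γ ^ t * min (c t * δ) (B + B) :=
    summable_discounted hγ0 hγ1 fun t => (abs_of_nonneg (hmin t)).trans_le (min_le_right _ _)
  rw [← (summable_discounted hγ0 hγ1 ha).tsum_sub (summable_discounted hγ0 hγ1 hb),
    ← Real.norm_eq_abs]
  refine tsum_of_norm_bounded hsum.hasSum fun t => ?_
  rw [← mul_sub, norm_mul, Real.norm_of_nonneg (pow_nonneg hγ0 t)]
  gcongr
  exact le_min (hab t) ((abs_sub _ _).trans (add_le_add (ha t) (hb t)))

end Discounting

section DynamicProgramming

variable {γ : ℝ}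

section Comparison

variable {A : Type*} [MeasurableSpace A] {κ : ℕ → A → ProbabilityMeasure A} {R V : ℕ → A → ℝ}
  {B C : ℝ}

lemma integral_le_discountedReturn_add (hγ0 : 0 ≤ γ) (hγ1 : γ < 1) (hκ : ∀ t, Measurable (κ t))
    (hRm : ∀ t, Measurable (R t)) (hR : ∀ t a, |R t a| ≤ B) (hVm : ∀ t, Measurable (V t))
    (hV : ∀ t a, |V t a| ≤ C) {ε : ℝ}
    (h : ∀ t a, V t a ≤ R t a + γ * ∫ a', V (t + 1) a' ∂(κ t a : Measure A) + (1 - γ) * ε)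
    (ι : ProbabilityMeasure A) :
    ∫ a, V 0 a ∂(ι : Measure A) ≤ discountedReturn γ ι κ R + ε := by
  have hintR (t) : Integrable (R t) (chainLaw ι κ t : Measure A) :=
    integrable_of_abs_le _ (hRm t) (hR t)
  have hintV (t) (μ : ProbabilityMeasure A) : Integrable (V t) (μ : Measure A) :=
    integrable_of_abs_le _ (hVm t) (hV t)
  have hintκ (t) : Integrable (fun a => ∫ a', V (t + 1) a' ∂(κ t a : Measure A))
      (chainLaw ι κ t : Measure A) := by
    let k : Kernel A A := ⟨fun a => κ t a, measurable_subtype_coe.comp (hκ t)⟩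
    have hVk := ((hVm (t + 1)).stronglyMeasurable.integral_kernel (κ := k)).measurable
    exact integrable_of_abs_le _ hVk fun a => abs_integral_le_of_abs_le _ (hV (t + 1))
  have hrec (t : ℕ) : ∫ a, V t a ∂(chainLaw ι κ t : Measure A) - ε
      ≤ ∫ a, R t a ∂(chainLaw ι κ t : Measure A)
        + γ * (∫ a, V (t + 1) a ∂(chainLaw ι κ (t + 1) : Measure A) - ε) := by
    have hmono := integral_mono (hintV t _)
      (((hintR t).add ((hintκ t).const_mul γ)).add (integrable_const ((1 - γ) * ε))) (h t)
    rw [integral_add' ((hintR t).add ((hintκ t).const_mul γ)) (integrable_const _),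
      integral_add' (hintR t) ((hintκ t).const_mul γ), integral_const_mul] at hmono
    rw [chainLaw_succ, integral_mixture (hκ t) (hintV _ _)]
    simp only [integral_const, probReal_univ, one_smul] at hmono
    linarith
  have hbound (t : ℕ) : |∫ a, V t a ∂(chainLaw ι κ t : Measure A) - ε| ≤ C + |ε| :=
    (abs_sub _ _).trans (by gcongr; exact abs_integral_le_of_abs_le _ (hV t))
  exact sub_le_iff_le_add.1 <| le_tsum_discounted_of_le hγ0 hγ1 hbound
    (fun t => abs_integral_le_of_abs_le _ (hR t)) hrec

lemma discountedReturn_le_integral (hγ0 : 0 ≤ γ) (hγ1 : γ < 1) (hκ : ∀ t, Measurable (κ t))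
    (hRm : ∀ t, Measurable (R t)) (hR : ∀ t a, |R t a| ≤ B) (hVm : ∀ t, Measurable (V t))
    (hV : ∀ t a, |V t a| ≤ C)
    (h : ∀ t a, R t a + γ * ∫ a', V (t + 1) a' ∂(κ t a : Measure A) ≤ V t a)
    (ι : ProbabilityMeasure A) :
    discountedReturn γ ι κ R ≤ ∫ a, V 0 a ∂(ι : Measure A) := by
  have hneg := integral_le_discountedReturn_add (R := fun t a => -R t a)
    (V := fun t a => -V t a) (ε := 0) hγ0 hγ1 hκ (fun t => (hRm t).neg)
    (fun t a => (abs_neg _).trans_le (hR t a)) (fun t => (hVm t).neg)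
    (fun t a => (abs_neg _).trans_le (hV t a))
    (fun t a => by rw [integral_neg]; linarith [h t a]) ι
  simp only [discountedReturn, integral_neg, mul_neg, tsum_neg] at hneg ⊢
  linarith

end Comparison

variable {Z U : Type*} [MetricSpace Z] [CompactSpace Z] [MeasurableSpace Z] [BorelSpace Z]
  [MetricSpace U] [CompactSpace U] [MeasurableSpace U] [BorelSpace U]

lemma exists_valueFunction (hγ0 : 0 ≤ γ) (hγ1 : γ < 1) {κ : ℕ → Z → ProbabilityMeasure Z}
    {R : ℕ → Z → ℝ} {B : ℝ} (hκ : ∀ t, Continuous (κ t)) (hRc : ∀ t, Continuous (R t))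
    (hR : ∀ t z, |R t z| ≤ B) :
    ∃ V : ℕ × Z →ᵇ ℝ, ∀ t z, V (t, z) = R t z + γ * ∫ z', V (t + 1, z') ∂(κ t z : Measure Z) := by
  lift γ to ℝ≥0 using hγ0
  have hcont (V : ℕ × Z →ᵇ ℝ) (t) : Continuous fun z => V (t, z) :=
    V.continuous.comp (Continuous.prodMk_right t)
  let bellman (V : ℕ × Z →ᵇ ℝ) : ℕ × Z →ᵇ ℝ := BoundedContinuousFunction.ofNormedAddCommGroup
    (fun s => R s.1 s.2 + γ * ∫ z', V (s.1 + 1, z') ∂(κ s.1 s.2 : Measure Z))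
    (continuous_prod_of_discrete_left.2 fun t => (hRc t).add <| continuous_const.mul <|
      continuous_integral (hκ t) ((hcont V (t + 1)).comp continuous_snd))
    (B + γ * ‖V‖) fun s => by
      refine (norm_add_le _ _).trans (add_le_add (hR s.1 s.2) ?_)
      rw [norm_mul, NNReal.norm_eq]
      gcongr
      exact abs_integral_le_of_abs_le _ fun z => V.norm_coe_le_norm _
  have hbellman : ContractingWith γ bellman := by
    refine ⟨by exact_mod_cast hγ1, .of_dist_le_mul fun V V' => ?_⟩
    refine (dist_le (by positivity)).2 fun s => ?_
    have hint (V : ℕ × Z →ᵇ ℝ) : Integrable (fun z => V (s.1 + 1, z)) (κ s.1 s.2 : Measure Z) :=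
      integrable_of_continuous (hcont V _) _
    simp only [bellman, coe_ofNormedAddCommGroup, dist_add_left]
    rw [Real.dist_eq, ← mul_sub, ← integral_sub (hint V) (hint V'), abs_mul, NNReal.abs_eq]
    gcongr
    exact abs_integral_le_of_abs_le _ fun z => V.dist_coe_le_dist (g := V') _
  refine ⟨hbellman.fixedPoint, fun t z => ?_⟩
  exact (DFunLike.congr_fun hbellman.fixedPoint_isFixedPt (t, z)).symm

omit [CompactSpace Z] in
lemma exists_measurable_integral_le_add {ρ : Z → ProbabilityMeasure U} (hρ : Continuous ρ)
    {Q : Z × U → ℝ} (hQ : Continuous Q) {δ : ℝ} (hδ : 0 < δ) :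
    ∃ a : Z → U, Measurable a ∧ ∀ z, ∫ u, Q (z, u) ∂(ρ z : Measure U) ≤ Q (z, a z) + δ := by
  classical
  rcases isEmpty_or_nonempty Z with hZ | ⟨⟨z₀⟩⟩
  · exact ⟨isEmptyElim, measurable_of_empty _, isEmptyElim⟩
  have : Nonempty U := (ρ z₀).nonempty
  let u := TopologicalSpace.denseSeq U
  have hexists (z) : ∃ n, ∫ v, Q (z, v) ∂(ρ z : Measure U) - δ < Q (z, u n) := by
    obtain ⟨v, hv⟩ := exists_integral_le
      (integrable_of_continuous (hQ.comp (Continuous.prodMk_right z)) (ρ z : Measure U))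
    exact (TopologicalSpace.denseRange_denseSeq U).exists_mem_open
      (isOpen_lt continuous_const (hQ.comp (Continuous.prodMk_right z))) ⟨v, by
        simpa using (sub_lt_self _ hδ).trans_le hv⟩
  refine ⟨fun z => u (Nat.find (hexists z)), ?_, fun z => ?_⟩
  · refine (measurable_from_nat (f := u)).comp (measurable_find hexists fun n => ?_)
    exact measurableSet_lt ((continuous_integral hρ hQ).measurable.sub_const δ)
      (hQ.comp (Continuous.prodMk_left (u n))).measurable
  · linarith [Nat.find_spec (hexists z)]

lemma integral_add_mul_integral_mixture (ρ : ProbabilityMeasure U)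
    {η : U → ProbabilityMeasure Z} (hη : Continuous η) {f : U → ℝ} (hf : Continuous f)
    {v : Z → ℝ} (hv : Continuous v) (c : ℝ) :
    ∫ u, f u ∂(ρ : Measure U) + c * ∫ z, v z ∂(mixture ρ η : Measure Z)
      = ∫ u, (f u + c * ∫ z, v z ∂(η u : Measure Z)) ∂(ρ : Measure U) := by
  have hηv : Continuous fun u => ∫ z, v z ∂(η u : Measure Z) :=
    continuous_integral hη (hv.comp continuous_snd)
  have hint : Integrable (fun u => c * ∫ z, v z ∂(η u : Measure Z)) (ρ : Measure U) :=
    integrable_of_continuous (continuous_const.mul hηv) _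
  rw [integral_mixture hη.measurable (integrable_of_continuous hv _), ← integral_const_mul,
    ← integral_add (integrable_of_continuous hf _) hint]

lemma exists_measurable_discountedReturn_le_add (hγ0 : 0 ≤ γ) (hγ1 : γ < 1)
    {ρ : ℕ → Z → ProbabilityMeasure U} {η : ℕ → Z → U → ProbabilityMeasure Z} (r : C(Z × U, ℝ))
    (hρ : ∀ t, Continuous (ρ t)) (hη : ∀ t, Continuous ↿(η t))
    (ι : ProbabilityMeasure Z) {ε : ℝ} (hε : 0 < ε) :
    ∃ a : ℕ → Z → U, (∀ t, Measurable (a t)) ∧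
      discountedReturn γ ι (fun t z => mixture (ρ t z) (η t z))
          (fun t z => ∫ u, r (z, u) ∂(ρ t z : Measure U))
        ≤ discountedReturn γ ι (fun t z => η t z (a t z)) (fun t z => r (z, a t z)) + ε := by
  have hB (s) : |r s| ≤ ‖r‖ := r.norm_coe_le_norm s
  have hκ (t) : Continuous fun z => mixture (ρ t z) (η t z) := continuous_mixture (hρ t) (hη t)
  have hR (t) : Continuous fun z => ∫ u, r (z, u) ∂(ρ t z : Measure U) :=
    continuous_integral (hρ t) r.continuous
  obtain ⟨V, hV⟩ := exists_valueFunction hγ0 hγ1 hκ hR fun t z =>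
    abs_integral_le_of_abs_le _ fun u => hB (z, u)
  have hVc (t) : Continuous fun z => V (t, z) := V.continuous.comp (Continuous.prodMk_right t)
  have hVb (t z) : |V (t, z)| ≤ ‖V‖ := V.norm_coe_le_norm _
  let Q (t : ℕ) (s : Z × U) : ℝ := r s + γ * ∫ z', V (t + 1, z') ∂(η t s.1 s.2 : Measure Z)
  have hQ (t) : Continuous (Q t) := r.continuous.add (continuous_const.mul
    (continuous_integral (κ := ↿(η t)) (hη t) ((hVc (t + 1)).comp continuous_snd)))
  have hVQ (t z) : V (t, z) = ∫ u, Q t (z, u) ∂(ρ t z : Measure U) :=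
    (hV t z).trans (integral_add_mul_integral_mixture _ ((hη t).comp (Continuous.prodMk_right z))
      (r.continuous.comp (Continuous.prodMk_right z)) (hVc (t + 1)) γ)
  choose a ha hgreedy using fun t =>
    exists_measurable_integral_le_add (hρ t) (hQ t) (mul_pos (sub_pos.2 hγ1) hε)
  refine ⟨a, ha, ?_⟩
  calc _ ≤ ∫ z, V (0, z) ∂(ι : Measure Z) := discountedReturn_le_integral hγ0 hγ1
        (fun t => (hκ t).measurable) (fun t => (hR t).measurable)
        (fun t z => abs_integral_le_of_abs_le _ fun u => hB (z, u))
        (fun t => (hVc t).measurable) hVb (fun t z => (hV t z).ge) ι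
    _ ≤ _ := integral_le_discountedReturn_add (V := fun t z => V (t, z)) hγ0 hγ1
        (fun t => (hη t).measurable.comp (measurable_id.prodMk (ha t)))
        (fun t => r.continuous.measurable.comp (measurable_id.prodMk (ha t))) (fun t z => hB _)
        (fun t => (hVc t).measurable) hVb (fun t z => (hVQ t z).trans_le (hgreedy t z)) ι

end DynamicProgramming

section EmpiricalMeasure

variable {X : Type*} [MetricSpace X] [CompactSpace X] [MeasurableSpace X] [BorelSpace X]
  {N : ℕ}

lemma integral_emp [Nonempty X] (hN : N ≠ 0) (x : Fin N → X) {f : X → ℝ} (hf : Continuous f) :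
    ∫ y, f y ∂(emp N x : Measure X) = (N : ℝ)⁻¹ * ∑ i, f (x i) := by
  have hcoe : (emp N x : Measure X) = (N : ENNReal)⁻¹ • ∑ i, Measure.dirac (x i) :=
    congrArg Subtype.val (dif_neg hN)
  rw [hcoe, integral_smul_measure,
    integral_finsetSum_measure fun i _ => integrable_of_continuous hf _]
  simp

lemma lipschitzWith_emp [Nonempty X] (N : ℕ) :
    LipschitzWith 1 (emp N : (Fin N → X) → ProbabilityMeasure X) := by
  rcases eq_or_ne N 0 with rfl | hN
  · exact LipschitzWith.of_dist_le_mul fun x y => by simp [Subsingleton.elim x y]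
  refine .of_dist_le_mul fun x y => W1_le fun f hf => ?_
  rw [integral_emp hN x hf.continuous, integral_emp hN y hf.continuous, ← mul_sub, abs_mul,
    abs_of_nonneg (by positivity), ← Finset.sum_sub_distrib, NNReal.coe_one, one_mul,
    inv_mul_le_iff₀ (by positivity)]
  calc |∑ i, (f (x i) - f (y i))| ≤ ∑ i, |f (x i) - f (y i)| := Finset.abs_sum_le_sum_abs _ _
    _ ≤ ∑ _i : Fin N, dist x y := Finset.sum_le_sum fun i _ => by
        simpa [Real.dist_eq] using (hf.dist_le_mul _ _).trans (by
          simpa using dist_le_pi_dist x y i)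
    _ = N * dist x y := by simp

lemma integral_abs_sub_integral_le_sqrt_variance {Ω : Type*} [MeasurableSpace Ω] {P : Measure Ω}
    [IsProbabilityMeasure P] {Y : Ω → ℝ} (hY : MemLp Y 2 P) :
    ∫ ω, |Y ω - ∫ ω', Y ω' ∂P| ∂P ≤ √(Var[Y; P]) := by
  have hcentered : MemLp (fun ω => |Y ω - ∫ ω', Y ω' ∂P|) 2 P :=
    (hY.sub (memLp_const _)).abs
  have hvar := variance_nonneg (fun ω => |Y ω - ∫ ω', Y ω' ∂P|) P
  rw [variance_eq_sub hcentered] at hvar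
  simp only [Pi.pow_apply, sq_abs] at hvar
  rw [← variance_eq_integral hY.aemeasurable] at hvar
  exact Real.le_sqrt_of_sq_le (sub_nonneg.1 hvar)

lemma variance_le_diam_sq (ν : ProbabilityMeasure X) {f : X → ℝ} (hf : LipschitzWith 1 f) :
    Var[f; (ν : Measure X)] ≤ Metric.diam (Set.univ : Set X) ^ 2 := by
  have a := ν.nonempty.some
  refine (variance_le_sq_of_bounded (a := f a - Metric.diam (Set.univ : Set X))
    (b := f a + Metric.diam (Set.univ : Set X)) (.of_forall fun x => ?_)
    hf.continuous.measurable.aemeasurable).trans_eq (by ring)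
  have hdist : |f x - f a| ≤ Metric.diam (Set.univ : Set X) := by
    simpa [Real.dist_eq] using (hf.dist_le_mul x a).trans (by
      simpa using Metric.dist_le_diam_of_mem Metric.isBounded_of_compactSpace
        (Set.mem_univ x) (Set.mem_univ a))
  exact ⟨by linarith [abs_le.1 hdist], by linarith [abs_le.1 hdist]⟩

lemma integral_abs_average_sub_le (hN : N ≠ 0) (ν : Fin N → ProbabilityMeasure X) {f : X → ℝ}
    (hf : LipschitzWith 1 f) :
    ∫ y, |(N : ℝ)⁻¹ * ∑ i, f (y i) - (N : ℝ)⁻¹ * ∑ i, ∫ x, f x ∂(ν i : Measure X)|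
        ∂(ProbabilityMeasure.pi ν : Measure (Fin N → X))
      ≤ Metric.diam (Set.univ : Set X) / √N := by
  have hmem (i) : MemLp f 2 (ν i : Measure X) := hf.continuous.memLp_of_hasCompactSupport
    (HasCompactSupport.of_compactSpace f)
  have hcont : Continuous fun y : Fin N → X => (N : ℝ)⁻¹ * ∑ i, f (y i) := by
    have := hf.continuous
    fun_prop
  have hmean : ∫ y, (N : ℝ)⁻¹ * ∑ i, f (y i) ∂(ProbabilityMeasure.pi ν : Measure (Fin N → X))
      = (N : ℝ)⁻¹ * ∑ i, ∫ x, f x ∂(ν i : Measure X) := by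
    have hint (i) : Integrable (fun y : Fin N → X => f (y i))
        (ProbabilityMeasure.pi ν : Measure (Fin N → X)) :=
      integrable_of_continuous (hf.continuous.comp (continuous_apply i)) _
    rw [integral_const_mul, integral_finsetSum _ fun i _ => hint i]
    congr! 2 with i
    exact integral_comp_eval (μ := fun i => (ν i : Measure X)) hf.continuous.aestronglyMeasurable
  have hvar : Var[fun y => (N : ℝ)⁻¹ * ∑ i, f (y i);
      (ProbabilityMeasure.pi ν : Measure (Fin N → X))]
      ≤ (N : ℝ)⁻¹ ^ 2 * (N * Metric.diam (Set.univ : Set X) ^ 2) := by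
    have hsum := variance_sum_pi (X := fun _ : Fin N => f) hmem
    rw [variance_const_mul]
    gcongr
    rw [ProbabilityMeasure.toMeasure_pi]
    simp only [Finset.sum_fn] at hsum
    exact hsum.trans_le ((Finset.sum_le_sum fun i _ => variance_le_diam_sq (ν i) hf).trans_eq
      (by simp))
  have hL2 := integral_abs_sub_integral_le_sqrt_variance (hcont.memLp_of_hasCompactSupport
    (p := 2) (μ := (ProbabilityMeasure.pi ν : Measure (Fin N → X)))
    (HasCompactSupport.of_compactSpace _))
  rw [hmean] at hL2
  refine hL2.trans ((Real.sqrt_le_sqrt hvar).trans_eq ?_)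
  rw [show (N : ℝ)⁻¹ ^ 2 * (N * Metric.diam (Set.univ : Set X) ^ 2)
    = Metric.diam (Set.univ : Set X) ^ 2 / N by field_simp, Real.sqrt_div (sq_nonneg _),
    Real.sqrt_sq Metric.diam_nonneg]

lemma exists_forall_integral_W1_emp_le (X : Type*) [MetricSpace X] [CompactSpace X]
    [MeasurableSpace X] [BorelSpace X] [Nonempty X] {δ : ℝ} (hδ : 0 < δ) :
    ∃ N₀ : ℕ, ∀ N ≥ N₀, ∀ (ν : Fin N → ProbabilityMeasure X) (m : ProbabilityMeasure X),
      (∀ f : C(X, ℝ), ∫ x, f x ∂(m : Measure X)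
        = (N : ℝ)⁻¹ * ∑ i, ∫ x, f x ∂(ν i : Measure X)) →
      ∫ y, W1 (emp N y) m ∂(ProbabilityMeasure.pi ν : Measure (Fin N → X)) ≤ δ := by
  obtain ⟨s, hs, hW1⟩ := exists_finset_W1_le (X := X) (half_pos hδ)
  set D := Metric.diam (Set.univ : Set X)
  have hlim : Tendsto (fun N : ℕ => δ / 2 + s.card * (D / √N)) atTop (𝓝 (δ / 2)) := by
    simpa using (((tendsto_const_nhds (x := D)).div_atTop
      (Real.tendsto_sqrt_atTop.comp tendsto_natCast_atTop_atTop)).const_mul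
        (s.card : ℝ)).const_add (δ / 2)
  obtain ⟨N₀, hN₀⟩ := eventually_atTop.1 ((hlim.eventually_le_const (half_lt_self hδ)).and
    (eventually_ne_atTop 0))
  refine ⟨N₀, fun N hN ν m hm => ?_⟩
  obtain ⟨hNδ, hNne⟩ := hN₀ N hN
  let dev (g : X →ᵇ ℝ) (y : Fin N → X) : ℝ :=
    |(N : ℝ)⁻¹ * ∑ i, g (y i) - (N : ℝ)⁻¹ * ∑ i, ∫ x, g x ∂(ν i : Measure X)|
  have hdev (g : X →ᵇ ℝ) :
      Integrable (dev g) (ProbabilityMeasure.pi ν : Measure (Fin N → X)) :=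
    integrable_of_continuous (by fun_prop) _
  have hpointwise (y : Fin N → X) : W1 (emp N y) m ≤ δ / 2 + ∑ g ∈ s, dev g y := by
    refine (hW1 (emp N y) m).trans_eq ?_
    congr! 4 with g
    · exact integral_emp hNne y g.continuous
    · exact hm g.toContinuousMap
  have hW1int : Integrable (fun y : Fin N → X => W1 (emp N y) m)
      (ProbabilityMeasure.pi ν : Measure (Fin N → X)) :=
    integrable_of_continuous ((lipschitzWith_emp N).continuous.dist continuous_const) _
  calc _ ≤ ∫ y, (δ / 2 + ∑ g ∈ s, dev g y) ∂(ProbabilityMeasure.pi ν : Measure (Fin N → X)) :=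
        integral_mono hW1int ((integrable_const _).add (integrable_finsetSum _ fun g _ => hdev g))
          hpointwise
    _ = δ / 2 + ∑ g ∈ s, ∫ y, dev g y ∂(ProbabilityMeasure.pi ν : Measure (Fin N → X)) := by
        rw [integral_add (integrable_const _) (integrable_finsetSum _ fun g _ => hdev g),
          integral_finsetSum _ fun g _ => hdev g]
        simp
    _ ≤ δ / 2 + ∑ _g ∈ s, D / √N := by
        gcongr with g hg
        exact integral_abs_average_sub_le hNne ν (hs g hg)
    _ ≤ δ := by simpa using hNδ

end EmpiricalMeasure

section Model

variable {X U X0 U0 : Type*} [MeasurableSpace X] [MeasurableSpace U] [MeasurableSpace X0]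
  [MeasurableSpace U0] (γ : ℝ)
  (p : X → U → X0 → U0 → ProbabilityMeasure X → ProbabilityMeasure X)
  (p0 : X0 → U0 → ProbabilityMeasure X → ProbabilityMeasure X0)
  (r : X0 → U0 → ProbabilityMeasure X → ℝ)
  (q : X → X0 → ProbabilityMeasure X → ProbabilityMeasure U)

/-- The law of the next state of a minor agent in state `x` that samples its action from
`q x x0 μ`. -/
noncomputable def agentStep (x : X) (x0 : X0) (u0 : U0)
    (μ : ProbabilityMeasure X) : ProbabilityMeasure X :=
  mixture (q x x0 μ) fun u => p x u x0 u0 μ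

variable {p q} in
omit [MeasurableSpace X0] [MeasurableSpace U0] in
lemma coe_agentStep {x : X} {x0 : X0} {u0 : U0} {μ : ProbabilityMeasure X}
    (hp : Measurable fun u => p x u x0 u0 μ) :
    (agentStep p q x x0 u0 μ : Measure X)
      = (q x x0 μ : Measure U).bind fun u => (p x u x0 u0 μ : Measure X) :=
  coe_mixture hp _

/-- The closed-loop mean field transition `μ ↦ T(x⁰, u⁰, μ, μ ⊗ q)`. -/
noncomputable def meanFieldStep (x0 : X0) (u0 : U0)
    (μ : ProbabilityMeasure X) : ProbabilityMeasure X :=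
  mixture μ fun x => agentStep p q x x0 u0 μ

/-- The transition kernel of the limiting system on states `(x⁰, μ)` under the major action. -/
noncomputable def limitTransition (z : X0 × ProbabilityMeasure X)
    (u0 : U0) : ProbabilityMeasure (X0 × ProbabilityMeasure X) :=
  (p0 z.1 u0 z.2).map (f := fun y0 => (y0, meanFieldStep p q z.1 u0 z.2))
    measurable_prodMk_right.aemeasurable

/-- The transition kernel of the `N`-agent system on states `(x⁰, (xⁱ)ᵢ)` under the major
action. -/
noncomputable def agentTransition [Nonempty X] {N : ℕ} (a : X0 × (Fin N → X)) (u0 : U0) :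
    ProbabilityMeasure (X0 × (Fin N → X)) :=
  (p0 a.1 u0 (emp N a.2)).prod
    (.pi fun i => agentStep p q (a.2 i) a.1 u0 (emp N a.2))

/-- The state `(x⁰, μ^N)` of the limiting system seen in the `N`-agent system. -/
noncomputable def empiricalState [Nonempty X] (N : ℕ) (a : X0 × (Fin N → X)) :
    X0 × ProbabilityMeasure X :=
  (a.1, emp N a.2)

/-- The objective `J(Φ⁻¹(q), q0)` of the limiting system started at `z`. -/
noncomputable def limitReturn (z : X0 × ProbabilityMeasure X)
    (q : ℕ → X → X0 → ProbabilityMeasure X → ProbabilityMeasure U)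
    (q0 : ℕ → X0 → ProbabilityMeasure X → ProbabilityMeasure U0) : ℝ :=
  discountedReturn γ (diracProba z)
    (fun t z => mixture (q0 t z.1 z.2) (limitTransition p p0 (q t) z))
    fun t z => ∫ u0, r z.1 u0 z.2 ∂(q0 t z.1 z.2 : Measure U0)

/-- The objective `J^N(q, q0)` of the `N`-agent system with minor agents i.i.d. `z.2` and major
agent `z.1` initially. -/
noncomputable def agentReturn [Nonempty X] (z : X0 × ProbabilityMeasure X) (N : ℕ)
    (q : ℕ → X → X0 → ProbabilityMeasure X → ProbabilityMeasure U)
    (q0 : ℕ → X0 → ProbabilityMeasure X → ProbabilityMeasure U0) : ℝ :=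
  discountedReturn γ ((diracProba z.1).prod (.pi fun _ : Fin N => z.2))
    (fun t a => mixture (q0 t a.1 (emp N a.2)) (agentTransition p p0 (q t) a))
    fun t a => ∫ u0, r a.1 u0 (emp N a.2) ∂(q0 t a.1 (emp N a.2) : Measure U0)

end Model

section Regularity

section Uncurry

variable {A B C D E Y : Type*} [PseudoMetricSpace A] [PseudoMetricSpace B] [PseudoMetricSpace C]
  [PseudoMetricSpace D] [PseudoMetricSpace E] [PseudoMetricSpace Y] {L : ℝ}

lemma lipschitzWith_of_dist_le_mul {f : A → Y} {d : A → A → ℝ} {c : ℝ≥0}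
    (hf : ∀ a a', dist (f a) (f a') ≤ L * d a a') (hd : ∀ a a', |d a a'| ≤ c * dist a a') :
    LipschitzWith (c * ‖L‖₊) f :=
  LipschitzWith.of_dist_le_mul fun a a' => by
    calc dist (f a) (f a') ≤ |L| * |d a a'| :=
          ((hf a a').trans (le_abs_self _)).trans_eq (abs_mul _ _)
      _ ≤ |L| * (c * dist a a') := by gcongr; exact hd a a'
      _ = (c * ‖L‖₊ : ℝ≥0) * dist a a' := by simp; ring

lemma lipschitzWith_uncurry₂ {f : A → B → Y}
    (hf : ∀ a a' b b', dist (f a b) (f a' b') ≤ L * (dist a a' + dist b b')) :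
    LipschitzWith (2 * ‖L‖₊) ↿f :=
  lipschitzWith_of_dist_le_mul (fun _ _ => hf _ _ _ _) fun s s' => by
    simp only [Prod.dist_eq, NNReal.coe_ofNat]; grind [dist_nonneg]

lemma lipschitzWith_uncurry₃ {f : A → B → C → Y}
    (hf : ∀ a a' b b' c c',
      dist (f a b c) (f a' b' c') ≤ L * (dist a a' + dist b b' + dist c c')) :
    LipschitzWith (3 * ‖L‖₊) ↿f :=
  lipschitzWith_of_dist_le_mul (fun _ _ => hf _ _ _ _ _ _) fun s s' => by
    simp only [Prod.dist_eq, NNReal.coe_ofNat]; grind [dist_nonneg]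

lemma lipschitzWith_uncurry₅ {f : A → B → C → D → E → Y}
    (hf : ∀ a a' b b' c c' d d' e e', dist (f a b c d e) (f a' b' c' d' e')
      ≤ L * (dist a a' + dist b b' + dist c c' + dist d d' + dist e e')) :
    LipschitzWith (5 * ‖L‖₊) ↿f :=
  lipschitzWith_of_dist_le_mul (fun _ _ => hf _ _ _ _ _ _ _ _ _ _) fun s s' => by
    simp only [Prod.dist_eq, NNReal.coe_ofNat]; grind [dist_nonneg]

end Uncurry

lemma lipschitzWith_comp_of_dist_le {A B C : Type*} [PseudoMetricSpace A] [PseudoMetricSpace B]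
    [PseudoMetricSpace C] {K : ℝ≥0} {f : B → C} {g : A → B} (hf : LipschitzWith K f)
    (hg : ∀ a a', dist (g a) (g a') ≤ dist a a') : LipschitzWith K fun a => f (g a) := by
  simpa [Function.comp_def] using hf.comp (LipschitzWith.mk_one hg)

variable {X U X0 U0 : Type*}
  [MetricSpace X] [CompactSpace X] [MeasurableSpace X] [BorelSpace X]
  [MetricSpace U] [CompactSpace U] [MeasurableSpace U] [BorelSpace U]
  [MetricSpace X0] [MetricSpace U0] {K : ℝ≥0}
  {p : X → U → X0 → U0 → ProbabilityMeasure X → ProbabilityMeasure X}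
  {q : X → X0 → ProbabilityMeasure X → ProbabilityMeasure U}

lemma lipschitzWith_agentStep (hp : LipschitzWith K ↿p) (hq : LipschitzWith K ↿q) :
    LipschitzWith (K * (1 + K)) ↿(agentStep p q) :=
  lipschitzWith_mixture
    (lipschitzWith_comp_of_dist_le hq
      (g := fun s : X × X0 × U0 × ProbabilityMeasure X => (s.1, s.2.1, s.2.2.2))
      fun s s' => by simp only [Prod.dist_eq]; grind)
    (lipschitzWith_comp_of_dist_le hp
      (g := fun s : (X × X0 × U0 × ProbabilityMeasure X) × U =>
        (s.1.1, s.2, s.1.2.1, s.1.2.2.1, s.1.2.2.2))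
      fun s s' => by simp only [Prod.dist_eq]; grind)

lemma lipschitzWith_meanFieldStep (hp : LipschitzWith K ↿p) (hq : LipschitzWith K ↿q) :
    LipschitzWith (K * (1 + K) * (1 + 1)) ↿(meanFieldStep p q) :=
  lipschitzWith_mixture (lipschitzWith_comp_of_dist_le .prod_snd fun s s' => le_max_right _ _)
    (lipschitzWith_comp_of_dist_le (lipschitzWith_agentStep hp hq)
      (g := fun s : (X0 × U0 × ProbabilityMeasure X) × X => (s.2, s.1.1, s.1.2.1, s.1.2.2))
      fun s s' => by simp only [Prod.dist_eq]; grind)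

lemma eq_meanFieldStep {T : X0 → U0 → ProbabilityMeasure X → ProbabilityMeasure X}
    (hp : Continuous ↿p) (hq : Continuous ↿q)
    (hT : ∀ x0 u0 μ, (T x0 u0 μ : Measure X) = (μ : Measure X).bind fun x =>
      (q x x0 μ : Measure U).bind fun u => (p x u x0 u0 μ : Measure X)) :
    T = meanFieldStep p q := by
  funext x0 u0 μ
  have hp' : Continuous fun s : X × U => p s.1 s.2 x0 u0 μ :=
    hp.comp (f := fun s : X × U => (s.1, s.2, x0, u0, μ)) (by fun_prop)
  have hq' : Continuous fun x => q x x0 μ := hq.comp (f := fun x => (x, x0, μ)) (by fun_prop)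
  have hstep : Continuous fun x => agentStep p q x x0 u0 μ := continuous_mixture hq' hp'
  have hcoe : (meanFieldStep p q x0 u0 μ : Measure X) = (μ : Measure X).bind fun x =>
      (q x x0 μ : Measure U).bind fun u => (p x u x0 u0 μ : Measure X) := by
    rw [meanFieldStep, coe_mixture hstep.measurable]
    simp only [coe_agentStep (hp'.comp (Continuous.prodMk_right _)).measurable]
  exact Subtype.ext ((hT x0 u0 μ).trans hcoe.symm)

lemma lipschitzWith_integral_reward [CompactSpace U0] [MeasurableSpace U0] [BorelSpace U0]
    {r : X0 → U0 → ProbabilityMeasure X → ℝ}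
    {q0 : X0 → ProbabilityMeasure X → ProbabilityMeasure U0}
    (hr : LipschitzWith K ↿r) (hq0 : LipschitzWith K ↿q0) :
    LipschitzWith (K * (1 + K)) fun z : X0 × ProbabilityMeasure X =>
      ∫ u0, r z.1 u0 z.2 ∂(q0 z.1 z.2 : Measure U0) :=
  lipschitzWith_integral hq0 <| lipschitzWith_comp_of_dist_le hr
    (g := fun s : (X0 × ProbabilityMeasure X) × U0 => (s.1.1, s.2, s.1.2))
    fun s s' => by simp only [Prod.dist_eq]; grind

variable [CompactSpace X0] [MeasurableSpace X0] [BorelSpace X0]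
  {p0 : X0 → U0 → ProbabilityMeasure X → ProbabilityMeasure X0}

lemma lipschitzWith_limitTransition (hp0 : LipschitzWith K ↿p0) (hp : LipschitzWith K ↿p)
    (hq : LipschitzWith K ↿q) :
    LipschitzWith (max 1 (K * (1 + K) * (1 + 1)) * (1 + K)) ↿(limitTransition p p0 q) := by
  let next (s : (X0 × ProbabilityMeasure X) × U0) (y0 : X0) : X0 × ProbabilityMeasure X :=
    (y0, meanFieldStep p q s.1.1 s.2 s.1.2)
  have hnext : LipschitzWith (max 1 (K * (1 + K) * (1 + 1))) ↿next :=
    LipschitzWith.prod_snd.prodMk <| lipschitzWith_comp_of_dist_le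
      (lipschitzWith_meanFieldStep hp hq)
      (g := fun s : ((X0 × ProbabilityMeasure X) × U0) × X0 => (s.1.1.1, s.1.2, s.1.1.2))
      fun s s' => by simp only [Prod.dist_eq]; grind
  have heq : ↿(limitTransition p p0 q) = fun s =>
      mixture (p0 s.1.1 s.2 s.1.2) fun y0 => diracProba (next s y0) :=
    funext fun s => (mixture_diracProba_comp measurable_prodMk_right _).symm
  rw [heq, ← one_mul (max 1 (K * (1 + K) * (1 + 1)))]
  exact lipschitzWith_mixture
    (lipschitzWith_comp_of_dist_le hp0
      (g := fun s : (X0 × ProbabilityMeasure X) × U0 => (s.1.1, s.2, s.1.2))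
      fun s s' => by simp only [Prod.dist_eq]; grind)
    (lipschitzWith_diracProba.comp hnext)

lemma continuous_agentTransition [Nonempty X] {N : ℕ} (hp0 : LipschitzWith K ↿p0)
    (hp : LipschitzWith K ↿p) (hq : LipschitzWith K ↿q) :
    Continuous ↿(agentTransition p p0 q (N := N)) := by
  have hemp := (lipschitzWith_emp (X := X) N).continuous
  refine ProbabilityMeasure.continuous_prod.comp (Continuous.prodMk ?_ ?_)
  · exact hp0.continuous.comp
      (f := fun s : (X0 × (Fin N → X)) × U0 => (s.1.1, s.2, emp N s.1.2)) (by fun_prop)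
  · refine ProbabilityMeasure.continuous_pi.comp (continuous_pi fun i => ?_)
    exact (lipschitzWith_agentStep hp hq).continuous.comp
      (f := fun s : (X0 × (Fin N → X)) × U0 => (s.1.2 i, s.1.1, s.2, emp N s.1.2)) (by fun_prop)

end Regularity

section Identification

variable {X U X0 U0 : Type*}
  [MetricSpace X] [CompactSpace X] [MeasurableSpace X] [BorelSpace X]
  [MetricSpace U] [CompactSpace U] [MeasurableSpace U] [BorelSpace U]
  [MetricSpace X0] [CompactSpace X0] [MeasurableSpace X0] [BorelSpace X0]
  [MetricSpace U0] [CompactSpace U0] [MeasurableSpace U0] [BorelSpace U0]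
  {K : ℝ≥0}
  {p : X → U → X0 → U0 → ProbabilityMeasure X → ProbabilityMeasure X}
  {p0 : X0 → U0 → ProbabilityMeasure X → ProbabilityMeasure X0}
  {r : X0 → U0 → ProbabilityMeasure X → ℝ}
  {q : ℕ → X → X0 → ProbabilityMeasure X → ProbabilityMeasure U}
  {q0 : ℕ → X0 → ProbabilityMeasure X → ProbabilityMeasure U0}

/-- The reordering `((x⁰, s), u⁰) ↦ (x⁰, u⁰, s)`. -/
def actionToMiddle (X0 S U0 : Type*) [MeasurableSpace X0] [MeasurableSpace S]
    [MeasurableSpace U0] : (X0 × S) × U0 ≃ᵐ X0 × U0 × S :=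
  MeasurableEquiv.prodAssoc.trans ((MeasurableEquiv.refl X0).prodCongr MeasurableEquiv.prodComm)

lemma tsum_m3LawN_eq_agentReturn [Nonempty X] (γ : ℝ) (hp : LipschitzWith K ↿p)
    (hp0 : LipschitzWith K ↿p0) (hr : Continuous ↿r) (hq : ∀ t, LipschitzWith K ↿(q t))
    (hq0 : ∀ t, Continuous ↿(q0 t)) (z : X0 × ProbabilityMeasure X) (N : ℕ) :
    ∑' t, γ ^ t * ∫ s, r s.1 s.2.1 (emp N s.2.2) ∂(m3LawN p p0 q q0 z.2 z.1 N t)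
      = agentReturn γ p p0 r z N q q0 := by
  have hemp := (lipschitzWith_emp (X := X) N).continuous
  have hρ (t) : Measurable fun a : X0 × (Fin N → X) => q0 t a.1 (emp N a.2) :=
    ((hq0 t).comp (f := fun a : X0 × (Fin N → X) => (a.1, emp N a.2)) (by fun_prop)).measurable
  have hpu (x x0 u0 μ) : Measurable fun u => p x u x0 u0 μ :=
    (hp.continuous.comp (f := fun u => (x, u, x0, u0, μ)) (by fun_prop)).measurable
  have he : Measurable (actionToMiddle X0 (Fin N → X) U0) := (actionToMiddle _ _ _).measurable
  refine tsum_integral_eq_discountedReturn γ (actionToMiddle X0 (Fin N → X) U0) hρ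
    (fun t => (continuous_agentTransition hp0 hp (hq t)).measurable) ?_ (fun t => ?_)
    fun P => integrable_of_continuous (hr.comp
      (f := fun s : X0 × U0 × (Fin N → X) => (s.1, s.2.1, emp N s.2.2)) (by fun_prop)) _
  · change _ = ((Measure.dirac z.1).prod (Measure.pi fun _ : Fin N => (z.2 : Measure X))).bind _
    rw [Measure.dirac_prod, bind_map _ measurable_prodMk_left (measurable_map_prodMk (hρ 0) he)]
    rfl
  · rw [m3LawN]
    simp only [← coe_agentStep (hpu _ _ _ _)]
    rfl

lemma tsum_m3LimLaw_eq_limitReturn (γ : ℝ) (hp : LipschitzWith K ↿p)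
    (hp0 : LipschitzWith K ↿p0) (hr : Continuous ↿r) (hq : ∀ t, LipschitzWith K ↿(q t))
    (hq0 : ∀ t, Continuous ↿(q0 t)) (z : X0 × ProbabilityMeasure X) :
    ∑' t, γ ^ t * ∫ s, r s.1 s.2.1 s.2.2
        ∂(m3LimLaw p0 q0 (fun t => meanFieldStep p (q t)) z.2 z.1 t)
      = limitReturn γ p p0 r z q q0 := by
  have hρ (t) : Measurable fun z : X0 × ProbabilityMeasure X => q0 t z.1 z.2 := (hq0 t).measurable
  have he : Measurable (actionToMiddle X0 (ProbabilityMeasure X) U0) :=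
    (actionToMiddle _ _ _).measurable
  refine tsum_integral_eq_discountedReturn γ (actionToMiddle X0 (ProbabilityMeasure X) U0) hρ
    (fun t => (lipschitzWith_limitTransition hp0 hp (hq t)).continuous.measurable) ?_ (fun t => ?_)
    fun P => integrable_of_continuous hr _
  · exact (Measure.dirac_bind (measurable_map_prodMk (hρ 0) he) z).symm
  · rw [m3LimLaw]
    congr! with s
    exact (bind_map _ measurable_prodMk_right (measurable_map_prodMk (hρ (t + 1)) he)).symm

end Identification

section MeanFieldAction

variable {X U X0 U0 : Type*}

/-- The mean field action `μ ⊗ q ∈ ℋ(μ)`, where every agent in state `x` samples its action from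
`q x`. -/
noncomputable def jointAction [MeasurableSpace X] [MeasurableSpace U] (μ : ProbabilityMeasure X)
    (q : X → ProbabilityMeasure U) : ProbabilityMeasure (X × U) :=
  mixture μ fun x => (diracProba x).prod (q x)

variable [MetricSpace X] [CompactSpace X] [MeasurableSpace X] [BorelSpace X]
  [MetricSpace U] [CompactSpace U] [MeasurableSpace U] [BorelSpace U]

lemma continuous_diracProba_prod {q : X → ProbabilityMeasure U} (hq : Continuous q) :
    Continuous fun x => (diracProba x).prod (q x) :=
  ProbabilityMeasure.continuous_prod.comp (continuous_diracProba.prodMk hq)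

lemma jointAction_mem_Hset {q : X → ProbabilityMeasure U} (hq : Continuous q)
    (μ : ProbabilityMeasure X) : jointAction μ q ∈ Hset μ := by
  have hm := (continuous_diracProba_prod hq).measurable
  have hm' : Measurable fun x => ((diracProba x).prod (q x) : Measure (X × U)) :=
    measurable_subtype_coe.comp hm
  change (jointAction μ q : Measure (X × U)).map Prod.fst = μ
  ext s hs
  rw [Measure.map_apply measurable_fst hs, jointAction, coe_mixture hm,
    Measure.bind_apply (measurable_fst hs) hm'.aemeasurable]
  simp only [← Set.prod_univ, ProbabilityMeasure.toMeasure_prod, Measure.prod_prod, measure_univ,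
    mul_one]
  simp [diracProba, hs]

lemma mixture_jointAction {Y : Type*} [MeasurableSpace Y] {q : X → ProbabilityMeasure U}
    (hq : Continuous q) {η : X × U → ProbabilityMeasure Y} (hη : Measurable η)
    (μ : ProbabilityMeasure X) :
    mixture (jointAction μ q) η = mixture μ fun x => mixture (q x) fun u => η (x, u) := by
  rw [jointAction, mixture_mixture (continuous_diracProba_prod hq).measurable hη]
  congr! with x
  have hprod : (diracProba x).prod (q x) = (q x).map measurable_prodMk_left.aemeasurable :=
    Subtype.ext (Measure.dirac_prod x)
  rw [hprod, mixture_map measurable_prodMk_left hη]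

lemma eq_meanFieldStep_jointAction {X0 U0 : Type*} [MetricSpace X0] [MetricSpace U0]
    {p : X → U → X0 → U0 → ProbabilityMeasure X → ProbabilityMeasure X}
    {q : X → X0 → ProbabilityMeasure X → ProbabilityMeasure U}
    {T : X0 → U0 → ProbabilityMeasure X → ProbabilityMeasure (X × U) → ProbabilityMeasure X}
    (hT : ∀ (x0 : X0) (u0 : U0) (μ : ProbabilityMeasure X) (ν : ProbabilityMeasure (X × U)),
      (T x0 u0 μ ν : Measure X)
        = (ν : Measure (X × U)).bind fun z => (p z.1 z.2 x0 u0 μ : Measure X))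
    (hp : Continuous ↿p) (hq : Continuous ↿q) (x0 : X0) (u0 : U0) (μ : ProbabilityMeasure X) :
    T x0 u0 μ (jointAction μ fun x => q x x0 μ) = meanFieldStep p q x0 u0 μ := by
  have hpm : Measurable fun z : X × U => p z.1 z.2 x0 u0 μ :=
    (hp.comp (f := fun z : X × U => (z.1, z.2, x0, u0, μ)) (by fun_prop)).measurable
  have hT' : T x0 u0 μ (jointAction μ fun x => q x x0 μ) = mixture _ _ :=
    Subtype.ext ((hT x0 u0 μ _).trans (coe_mixture hpm _).symm)
  exact hT'.trans (mixture_jointAction (q := fun x => q x x0 μ)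
    (hq.comp (f := fun x => (x, x0, μ)) (by fun_prop)) hpm μ)

end MeanFieldAction

section Optimality

variable {X U X0 U0 : Type*}
  [MetricSpace X] [CompactSpace X] [MeasurableSpace X] [BorelSpace X]
  [MetricSpace U] [CompactSpace U] [MeasurableSpace U] [BorelSpace U]
  [MetricSpace X0] [CompactSpace X0] [MeasurableSpace X0] [BorelSpace X0]
  [MetricSpace U0] [CompactSpace U0] [MeasurableSpace U0] [BorelSpace U0]
  {K : ℝ≥0}
  {p : X → U → X0 → U0 → ProbabilityMeasure X → ProbabilityMeasure X}
  {p0 : X0 → U0 → ProbabilityMeasure X → ProbabilityMeasure X0}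
  {r : X0 → U0 → ProbabilityMeasure X → ℝ}
  {q : ℕ → X → X0 → ProbabilityMeasure X → ProbabilityMeasure U}
  {q0 : ℕ → X0 → ProbabilityMeasure X → ProbabilityMeasure U0}
  {T : X0 → U0 → ProbabilityMeasure X → ProbabilityMeasure (X × U) → ProbabilityMeasure X}

lemma tsum_m3Law_eq_discountedReturn (γ : ℝ)
    (hT : ∀ (x0 : X0) (u0 : U0) (μ : ProbabilityMeasure X) (ν : ProbabilityMeasure (X × U)),
      (T x0 u0 μ ν : Measure X)
        = (ν : Measure (X × U)).bind fun z => (p z.1 z.2 x0 u0 μ : Measure X))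
    (hp : LipschitzWith K ↿p) (hp0 : LipschitzWith K ↿p0) (hq : ∀ t, LipschitzWith K ↿(q t))
    (z : X0 × ProbabilityMeasure X) {a : ℕ → X0 × ProbabilityMeasure X → U0}
    (ha : ∀ t, Measurable (a t)) :
    ∑' t, γ ^ t * ∫ s, r s.1 (a t s) s.2
        ∂(m3Law p0 T (fun t s => (jointAction s.2 fun x => q t x s.1 s.2, a t s)) z t)
      = discountedReturn γ (diracProba z) (fun t s => limitTransition p p0 (q t) s (a t s))
        fun t s => r s.1 (a t s) s.2 := by
  have hκ (t) : Measurable fun s => limitTransition p p0 (q t) s (a t s) :=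
    (lipschitzWith_limitTransition hp0 hp (hq t)).continuous.measurable.comp
      (f := fun s => (s, a t s)) (measurable_id.prodMk (ha t))
  unfold discountedReturn
  congr! with t
  refine eq_chainLaw hκ rfl (fun t => ?_) t
  simp only [m3Law, eq_meanFieldStep_jointAction hT hp.continuous (hq t).continuous]
  rfl

lemma limitReturn_le {γ : ℝ} (hγ0 : 0 ≤ γ) (hγ1 : γ < 1)
    (hT : ∀ (x0 : X0) (u0 : U0) (μ : ProbabilityMeasure X) (ν : ProbabilityMeasure (X × U)),
      (T x0 u0 μ ν : Measure X)
        = (ν : Measure (X × U)).bind fun z => (p z.1 z.2 x0 u0 μ : Measure X))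
    (hp : LipschitzWith K ↿p) (hp0 : LipschitzWith K ↿p0) (hr : Continuous ↿r)
    (hq : ∀ t, LipschitzWith K ↿(q t)) (hq0 : ∀ t, Continuous ↿(q0 t))
    {z : X0 × ProbabilityMeasure X} {J : ℝ}
    (hJ : ∀ pol : ℕ → X0 × ProbabilityMeasure X → ProbabilityMeasure (X × U) × U0,
      (∀ t, Measurable (pol t)) → (∀ t s, (pol t s).1 ∈ Hset s.2) →
      ∑' t, γ ^ t * ∫ s, r s.1 (pol t s).2 s.2 ∂(m3Law p0 T pol z t) ≤ J) :
    limitReturn γ p p0 r z q q0 ≤ J := by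
  refine le_of_forall_pos_le_add fun ε hε => ?_
  let reward : C((X0 × ProbabilityMeasure X) × U0, ℝ) :=
    ⟨fun s => r s.1.1 s.2 s.1.2, hr.comp
      (f := fun s : (X0 × ProbabilityMeasure X) × U0 => (s.1.1, s.2, s.1.2)) (by fun_prop)⟩
  obtain ⟨a, ha, hle⟩ := exists_measurable_discountedReturn_le_add hγ0 hγ1 reward hq0
    (fun t => (lipschitzWith_limitTransition hp0 hp (hq t)).continuous) (diracProba z) hε
  have hjoint (t) :
      Continuous fun s : X0 × ProbabilityMeasure X => jointAction s.2 fun x => q t x s.1 s.2 :=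
    continuous_mixture continuous_snd <| ProbabilityMeasure.continuous_prod.comp <|
      (continuous_diracProba.comp continuous_snd).prodMk <| (hq t).continuous.comp
        (f := fun s : (X0 × ProbabilityMeasure X) × X => (s.2, s.1.1, s.1.2)) (by fun_prop)
  have hpol := hJ (fun t s => (jointAction s.2 fun x => q t x s.1 s.2, a t s))
    (fun t => (hjoint t).measurable.prodMk (ha t))
    fun t s => jointAction_mem_Hset ((hq t).continuous.comp
      (f := fun x => (x, s.1, s.2)) (by fun_prop)) s.2
  rw [tsum_m3Law_eq_discountedReturn γ hT hp hp0 hq z ha] at hpol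
  exact hle.trans (add_le_add_left hpol ε)

end Optimality

section MeanFieldLimit

lemma dist_map_map_le {Ω Z : Type*} [MeasurableSpace Ω] [MetricSpace Z] [CompactSpace Z]
    [MeasurableSpace Z] [BorelSpace Z] {f g : Ω → Z} (hf : Measurable f) (hg : Measurable g)
    (P : ProbabilityMeasure Ω) :
    dist (P.map hf.aemeasurable) (P.map hg.aemeasurable)
      ≤ ∫ ω, dist (f ω) (g ω) ∂(P : Measure Ω) := by
  refine W1_le fun h hh => ?_
  have hint {e : Ω → Z} (he : Measurable e) : Integrable (fun ω => h (e ω)) (P : Measure Ω) :=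
    (integrable_of_continuous hh.continuous (P.map he.aemeasurable : Measure Z)).comp_measurable he
  have hdist : Integrable (fun ω => dist (f ω) (g ω)) (P : Measure Ω) :=
    (integrable_of_continuous (f := fun z : Z × Z => dist z.1 z.2) continuous_dist
      (P.map (hf.prodMk hg).aemeasurable : Measure (Z × Z))).comp_measurable (hf.prodMk hg)
  rw [ProbabilityMeasure.toMeasure_map, ProbabilityMeasure.toMeasure_map, ← Real.norm_eq_abs,
    integral_map hf.aemeasurable hh.continuous.aestronglyMeasurable,
    integral_map hg.aemeasurable hh.continuous.aestronglyMeasurable,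
    ← integral_sub (hint hf) (hint hg)]
  exact norm_integral_le_of_norm_le hdist (.of_forall fun ω => by
    simpa [Real.dist_eq] using hh.dist_le_mul (f ω) (g ω))

lemma dist_map_prod_le {A Y S : Type*} [MetricSpace A] [CompactSpace A] [MeasurableSpace A]
    [BorelSpace A] [MeasurableSpace Y] [MetricSpace S] [CompactSpace S] [MeasurableSpace S]
    [BorelSpace S] {g : Y → S} (hg : Measurable g) (P : ProbabilityMeasure A)
    (Q : ProbabilityMeasure Y) (m : S) :
    dist ((P.prod Q).map (measurable_id.prodMap hg).aemeasurable)
        (P.map (f := fun a => (a, m)) measurable_prodMk_right.aemeasurable)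
      ≤ ∫ y, dist (g y) m ∂(Q : Measure Y) := by
  have hm : Measurable fun s : A × Y => (s.1, m) := measurable_fst.prodMk measurable_const
  have hP : P.map (f := fun a => (a, m)) measurable_prodMk_right.aemeasurable
      = (P.prod Q).map hm.aemeasurable := by
    conv_lhs => rw [← ProbabilityMeasure.map_fst_prod P Q]
    exact Subtype.ext (Measure.map_map measurable_prodMk_right measurable_fst)
  rw [hP]
  refine (dist_map_map_le (measurable_id.prodMap hg) hm _).trans_eq ?_
  simp [Prod.dist_eq, integral_fun_snd (fun y => dist (g y) m)]

variable {X U X0 U0 : Type*}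
  [MetricSpace X] [CompactSpace X] [MeasurableSpace X] [BorelSpace X] [Nonempty X]
  [MetricSpace U] [CompactSpace U] [MeasurableSpace U] [BorelSpace U]
  [MetricSpace X0] [MetricSpace U0]
  {K : ℝ≥0}
  {p : X → U → X0 → U0 → ProbabilityMeasure X → ProbabilityMeasure X}

lemma integral_meanFieldStep_emp {q : X → X0 → ProbabilityMeasure X → ProbabilityMeasure U}
    (hp : LipschitzWith K ↿p) (hq : LipschitzWith K ↿q) {N : ℕ} (hN : N ≠ 0) (x : Fin N → X)
    (x0 : X0) (u0 : U0) (f : C(X, ℝ)) :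
    ∫ y, f y ∂(meanFieldStep p q x0 u0 (emp N x) : Measure X)
      = (N : ℝ)⁻¹ * ∑ i, ∫ y, f y ∂(agentStep p q (x i) x0 u0 (emp N x) : Measure X) := by
  have hstep : Continuous fun y => agentStep p q y x0 u0 (emp N x) :=
    (lipschitzWith_agentStep hp hq).continuous.comp
      (f := fun y => (y, x0, u0, emp N x)) (by fun_prop)
  rw [meanFieldStep, integral_mixture hstep.measurable (integrable_of_continuous f.continuous _)]
  exact integral_emp hN x (continuous_integral hstep (f.continuous.comp continuous_snd))

lemma continuous_empiricalState (N : ℕ) :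
    Continuous (empiricalState N : X0 × (Fin N → X) → X0 × ProbabilityMeasure X) :=
  continuous_fst.prodMk ((lipschitzWith_emp N).continuous.comp continuous_snd)

variable [CompactSpace X0] [MeasurableSpace X0] [BorelSpace X0]
  {p0 : X0 → U0 → ProbabilityMeasure X → ProbabilityMeasure X0}

lemma exists_forall_dist_map_empiricalState_le (hp : LipschitzWith K ↿p) {δ : ℝ} (hδ : 0 < δ) :
    ∃ N₀ : ℕ, ∀ N ≥ N₀,
      (∀ z : X0 × ProbabilityMeasure X,
        dist (((diracProba z.1).prod (.pi fun _ : Fin N => z.2)).map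
            (continuous_empiricalState N).measurable.aemeasurable) (diracProba z) ≤ δ) ∧
      ∀ q : X → X0 → ProbabilityMeasure X → ProbabilityMeasure U, LipschitzWith K ↿q → ∀ a u0,
        dist ((agentTransition p p0 q a u0).map
            (continuous_empiricalState N).measurable.aemeasurable)
          (limitTransition p p0 q (empiricalState N a) u0) ≤ δ := by
  obtain ⟨N₀, hN₀⟩ := exists_forall_integral_W1_emp_le X hδ
  refine ⟨max N₀ 1, fun N hN => ?_⟩
  have hN0 : N ≠ 0 := by lia
  have hdist (P : ProbabilityMeasure X0) (ν : Fin N → ProbabilityMeasure X)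
      (m : ProbabilityMeasure X) (hm : ∀ f : C(X, ℝ), ∫ x, f x ∂(m : Measure X)
        = (N : ℝ)⁻¹ * ∑ i, ∫ x, f x ∂(ν i : Measure X)) :
      dist ((P.prod (.pi ν)).map (continuous_empiricalState N).measurable.aemeasurable)
        (P.map (f := fun y0 => (y0, m)) measurable_prodMk_right.aemeasurable) ≤ δ :=
    (dist_map_prod_le (lipschitzWith_emp N).continuous.measurable P (.pi ν) m).trans
      (hN₀ N (le_of_max_le_left hN) ν m hm)
  refine ⟨fun z => ?_, fun q hq a u0 =>
    hdist _ _ _ (integral_meanFieldStep_emp hp hq hN0 a.2 a.1 u0)⟩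
  have hz : diracProba z = (diracProba z.1).map (f := fun y0 => (y0, z.2))
      measurable_prodMk_right.aemeasurable :=
    Subtype.ext (Measure.map_dirac' measurable_prodMk_right z.1).symm
  rw [hz]
  exact hdist _ _ _ fun f => by simp [hN0]

lemma exists_forall_abs_agentReturn_sub_limitReturn_le [CompactSpace U0] [MeasurableSpace U0]
    [BorelSpace U0] {r : X0 → U0 → ProbabilityMeasure X → ℝ} {γ : ℝ} (hγ0 : 0 ≤ γ) (hγ1 : γ < 1)
    (hp : LipschitzWith K ↿p) (hp0 : LipschitzWith K ↿p0) (hr : LipschitzWith K ↿r)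
    (z : X0 × ProbabilityMeasure X) {ε : ℝ} (hε : 0 < ε) :
    ∃ N₀ : ℕ, ∀ N ≥ N₀, ∀ q : ℕ → X → X0 → ProbabilityMeasure X → ProbabilityMeasure U,
      ∀ q0 : ℕ → X0 → ProbabilityMeasure X → ProbabilityMeasure U0,
      (∀ t, LipschitzWith K ↿(q t)) → (∀ t, LipschitzWith K ↿(q0 t)) →
      |agentReturn γ p p0 r z N q q0 - limitReturn γ p p0 r z q q0| ≤ ε := by
  let reward : C(X0 × U0 × ProbabilityMeasure X, ℝ) := ⟨↿r, hr.continuous⟩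
  let L : ℝ≥0 := max 1 (K * (1 + K) * (1 + 1)) * (1 + K) * (1 + K)
  obtain ⟨δ, hδ, hsum⟩ := exists_pos_abs_tsum_sub_tsum_le hγ0 hγ1
    (c := fun t => (K * (1 + K) : ℝ≥0) * ∑ i ∈ Finset.range (t + 1), (L : ℝ) ^ i)
    (fun t => by positivity) (norm_nonneg reward) hε
  obtain ⟨N₀, hN₀⟩ := exists_forall_dist_map_empiricalState_le (X0 := X0) (p0 := p0) hp hδ
  refine ⟨N₀, fun N hN q q0 hq hq0 => ?_⟩
  obtain ⟨hinit, hstep⟩ := hN₀ N hN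
  have hemp := continuous_empiricalState (X := X) (X0 := X0) N
  have hbound (t x0 μ) : |∫ u0, r x0 u0 μ ∂(q0 t x0 μ : Measure U0)| ≤ ‖reward‖ :=
    abs_integral_le_of_abs_le _ fun u0 => reward.norm_coe_le_norm (x0, u0, μ)
  have htrans (t) := continuous_agentTransition (N := N) hp0 hp (hq t)
  have hround (t) (a : X0 × (Fin N → X)) :
      dist ((mixture (q0 t a.1 (emp N a.2)) (agentTransition p p0 (q t) a)).map
          hemp.measurable.aemeasurable)
        (mixture (q0 t a.1 (emp N a.2)) (limitTransition p p0 (q t) (empiricalState N a))) ≤ δ := by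
    have htrans_a : Measurable (agentTransition p p0 (q t) a) :=
      ((htrans t).comp (Continuous.prodMk_right a)).measurable
    rw [map_mixture htrans_a hemp.measurable]
    exact dist_mixture_le_of_dist_le (measurable_map htrans_a hemp.measurable)
      ((lipschitzWith_limitTransition hp0 hp (hq t)).continuous.comp
        (Continuous.prodMk_right _)).measurable (hstep (q t) (hq t) a) _
  exact hsum _ _ (fun t => abs_integral_le_of_abs_le _ fun a => hbound t _ _)
    (fun t => abs_integral_le_of_abs_le _ fun z => hbound t _ _)
    fun t => abs_integral_chainLaw_sub_le
      (fun t => (continuous_mixture ((hq0 t).continuous.comp hemp) (htrans t)).measurable)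
      hemp.measurable
      (fun t => lipschitzWith_mixture (hq0 t) (lipschitzWith_limitTransition hp0 hp (hq t)))
      (hinit z) hround (lipschitzWith_integral_reward hr (hq0 t)) t

lemma exists_forall_agentReturn_le_add [CompactSpace U0] [MeasurableSpace U0]
    [BorelSpace U0] {r : X0 → U0 → ProbabilityMeasure X → ℝ} {γ : ℝ} (hγ0 : 0 ≤ γ) (hγ1 : γ < 1)
    (hp : LipschitzWith K ↿p) (hp0 : LipschitzWith K ↿p0) (hr : LipschitzWith K ↿r)
    {z : X0 × ProbabilityMeasure X}
    {qstar : ℕ → X → X0 → ProbabilityMeasure X → ProbabilityMeasure U}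
    {q0star : ℕ → X0 → ProbabilityMeasure X → ProbabilityMeasure U0}
    (hqstar : ∀ t, LipschitzWith K ↿(qstar t)) (hq0star : ∀ t, LipschitzWith K ↿(q0star t))
    (hopt : ∀ q q0, (∀ t, LipschitzWith K ↿(q t)) → (∀ t, LipschitzWith K ↿(q0 t)) →
      limitReturn γ p p0 r z q q0 ≤ limitReturn γ p p0 r z qstar q0star)
    {ε : ℝ} (hε : 0 < ε) :
    ∃ N₀ : ℕ, ∀ N ≥ N₀, ∀ q q0, (∀ t, LipschitzWith K ↿(q t)) → (∀ t, LipschitzWith K ↿(q0 t)) →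
      agentReturn γ p p0 r z N q q0 ≤ agentReturn γ p p0 r z N qstar q0star + ε := by
  obtain ⟨N₀, hN₀⟩ :=
    exists_forall_abs_agentReturn_sub_limitReturn_le hγ0 hγ1 hp hp0 hr z (half_pos hε)
  refine ⟨N₀, fun N hN q q0 hq hq0 => ?_⟩
  have hupper := (abs_le.mp (hN₀ N hN q q0 hq hq0)).2
  have hlower := (abs_le.mp (hN₀ N hN qstar q0star hqstar hq0star)).1
  linarith [hopt q q0 hq hq0]

end MeanFieldLimit

end M3FC

open M3FC

/-- approximate optimality of M3FC solutions. If `(π̂*, π⁰*)` are optimal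
(deterministic) policies for the limiting M3FC MDP, with induced agent-level policy
`Φ(π̂*) = π* ∈ Π` and `π⁰* ∈ Π⁰`, then `(Φ(π̂*), π⁰*)` is `ε(N)`-optimal in the `N`-agent
system: `J^N(Φ(π̂*), π⁰*) ≥ sup_{(π,π⁰) ∈ Π × Π⁰} J^N(π,π⁰) − ε(N)` with `ε(N) → 0`. -/
theorem statement15 {X U X0 U0 : Type*}
    [MetricSpace X] [CompactSpace X] [MeasurableSpace X] [BorelSpace X] [Nonempty X]
    [MetricSpace U] [CompactSpace U] [MeasurableSpace U] [BorelSpace U]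
    [MetricSpace X0] [CompactSpace X0] [MeasurableSpace X0] [BorelSpace X0]
    [MetricSpace U0] [CompactSpace U0] [MeasurableSpace U0] [BorelSpace U0]
    (γ : ℝ) (hγ0 : 0 < γ) (hγ1 : γ < 1) (Lp Lp0 Lr LPi : ℝ)
    (p : X → U → X0 → U0 → ProbabilityMeasure X → ProbabilityMeasure X)
    (hp : ∀ (x x' : X) (u u' : U) (x0 x0' : X0) (u0 u0' : U0)
        (μ μ' : ProbabilityMeasure X) (f : X → ℝ), LipschitzWith 1 f →
      |∫ y, f y ∂(p x u x0 u0 μ : Measure X) - ∫ y, f y ∂(p x' u' x0' u0' μ' : Measure X)|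
        ≤ Lp * (dist x x' + dist u u' + dist x0 x0' + dist u0 u0' + W1 μ μ'))
    (p0 : X0 → U0 → ProbabilityMeasure X → ProbabilityMeasure X0)
    (hp0 : ∀ (x0 x0' : X0) (u0 u0' : U0) (μ μ' : ProbabilityMeasure X) (f : X0 → ℝ),
        LipschitzWith 1 f →
      |∫ y, f y ∂(p0 x0 u0 μ : Measure X0) - ∫ y, f y ∂(p0 x0' u0' μ' : Measure X0)|
        ≤ Lp0 * (dist x0 x0' + dist u0 u0' + W1 μ μ'))
    (r : X0 → U0 → ProbabilityMeasure X → ℝ)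
    (hr : ∀ (x0 x0' : X0) (u0 u0' : U0) (μ μ' : ProbabilityMeasure X),
      |r x0 u0 μ - r x0' u0' μ'| ≤ Lr * (dist x0 x0' + dist u0 u0' + W1 μ μ'))
    (Pi : Set (ℕ → X → X0 → ProbabilityMeasure X → ProbabilityMeasure U))
    (hPi : ∀ π ∈ Pi, ∀ (t : ℕ) (x x' : X) (x0 x0' : X0) (μ μ' : ProbabilityMeasure X)
        (g : U → ℝ), LipschitzWith 1 g →
      |∫ u, g u ∂(π t x x0 μ : Measure U) - ∫ u, g u ∂(π t x' x0' μ' : Measure U)|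
        ≤ LPi * (dist x x' + dist x0 x0' + W1 μ μ'))
    (Pi0 : Set (ℕ → X0 → ProbabilityMeasure X → ProbabilityMeasure U0))
    (hPi0 : ∀ π0 ∈ Pi0, ∀ (t : ℕ) (x0 x0' : X0) (μ μ' : ProbabilityMeasure X) (g : U0 → ℝ),
        LipschitzWith 1 g →
      |∫ u, g u ∂(π0 t x0 μ : Measure U0) - ∫ u, g u ∂(π0 t x0' μ' : Measure U0)|
        ≤ LPi * (dist x0 x0' + W1 μ μ'))
    (μ0 : ProbabilityMeasure X) (x00 : X0)
    (T : X0 → U0 → ProbabilityMeasure X → ProbabilityMeasure (X × U) → ProbabilityMeasure X)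
    (hT : ∀ (x0 : X0) (u0 : U0) (μ : ProbabilityMeasure X) (ν : ProbabilityMeasure (X × U)),
      (T x0 u0 μ ν : Measure X)
        = (ν : Measure (X × U)).bind fun z => (p z.1 z.2 x0 u0 μ : Measure X))
    (Tcl : (ℕ → X → X0 → ProbabilityMeasure X → ProbabilityMeasure U) →
      ℕ → X0 → U0 → ProbabilityMeasure X → ProbabilityMeasure X)
    (hTcl : ∀ q ∈ Pi, ∀ (t : ℕ) (x0 : X0) (u0 : U0) (μ : ProbabilityMeasure X),
      (Tcl q t x0 u0 μ : Measure X) = (μ : Measure X).bind fun x =>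
        ((q t x x0 μ : Measure U)).bind fun u => (p x u x0 u0 μ : Measure X))
    (πstar : ℕ → X → X0 → ProbabilityMeasure X → ProbabilityMeasure U) (hπstar : πstar ∈ Pi)
    (π0star : ℕ → X0 → ProbabilityMeasure X → ProbabilityMeasure U0) (hπ0star : π0star ∈ Pi0)
    (hopt : ∀ pol : ℕ → X0 × ProbabilityMeasure X → ProbabilityMeasure (X × U) × U0,
      (∀ t, Measurable (pol t)) → (∀ t s, (pol t s).1 ∈ Hset s.2) →
      (∑' t : ℕ, γ ^ t * ∫ s, r s.1 (pol t s).2 s.2 ∂(m3Law p0 T pol (x00, μ0) t))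
        ≤ ∑' t : ℕ, γ ^ t *
            ∫ s, r s.1 s.2.1 s.2.2 ∂(m3LimLaw p0 π0star (Tcl πstar) μ0 x00 t)) :
    ∀ ε > (0 : ℝ), ∃ N0 : ℕ, ∀ N ≥ N0, ∀ q ∈ Pi, ∀ q0 ∈ Pi0,
      (∑' t : ℕ, γ ^ t * ∫ s, r s.1 s.2.1 (emp N s.2.2)
          ∂(m3LawN p p0 πstar π0star μ0 x00 N t))
        ≥ (∑' t : ℕ, γ ^ t * ∫ s, r s.1 s.2.1 (emp N s.2.2)
            ∂(m3LawN p p0 q q0 μ0 x00 N t)) - ε := by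
  let K : ℝ≥0 := 5 * ‖Lp‖₊ ⊔ 3 * ‖Lp0‖₊ ⊔ 3 * ‖Lr‖₊ ⊔ 3 * ‖LPi‖₊ ⊔ 2 * ‖LPi‖₊
  have hpK : LipschitzWith K ↿p := (lipschitzWith_uncurry₅ fun _ _ _ _ _ _ _ _ _ _ =>
    W1_le (hp _ _ _ _ _ _ _ _ _ _)).weaken (by simp [K])
  have hp0K : LipschitzWith K ↿p0 := (lipschitzWith_uncurry₃ fun _ _ _ _ _ _ =>
    W1_le (hp0 _ _ _ _ _ _)).weaken (by simp [K])
  have hrK : LipschitzWith K ↿r := (lipschitzWith_uncurry₃ hr).weaken (by simp [K])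
  have hqK {q} (hq : q ∈ Pi) (t) : LipschitzWith K ↿(q t) :=
    (lipschitzWith_uncurry₃ fun _ _ _ _ _ _ => W1_le (hPi q hq t _ _ _ _ _ _)).weaken (by simp [K])
  have hq0K {q0} (hq0 : q0 ∈ Pi0) (t) : LipschitzWith K ↿(q0 t) :=
    (lipschitzWith_uncurry₂ fun _ _ _ _ => W1_le (hPi0 q0 hq0 t _ _ _ _)).weaken (by simp [K])
  have hstar : Tcl πstar = fun t => meanFieldStep p (πstar t) := funext fun t =>
    eq_meanFieldStep hpK.continuous (hqK hπstar t).continuous (hTcl πstar hπstar t)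
  intro ε hε
  obtain ⟨N₀, hN₀⟩ := exists_forall_agentReturn_le_add (z := (x00, μ0)) hγ0.le hγ1 hpK hp0K hrK
    (hqK hπstar) (hq0K hπ0star) (fun q q0 hq hq0 => limitReturn_le hγ0.le hγ1 hT hpK hp0K
      hrK.continuous hq (fun t => (hq0 t).continuous) <| by
        rwa [← tsum_m3LimLaw_eq_limitReturn γ hpK hp0K hrK.continuous (hqK hπstar)
          (fun t => (hq0K hπ0star t).continuous), ← hstar]) hε
  have hreturn (N) {q q0} (hq : q ∈ Pi) (hq0 : q0 ∈ Pi0) :=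
    tsum_m3LawN_eq_agentReturn γ hpK hp0K hrK.continuous (hqK hq)
      (fun t => (hq0K hq0 t).continuous) (x00, μ0) N
  refine ⟨N₀, fun N hN q hq q0 hq0 => ?_⟩
  rw [hreturn N hπstar hπ0star, hreturn N hq hq0]
  exact sub_le_iff_le_add.mpr (hN₀ N hN q q0 (hqK hq) (hq0K hq0))
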